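/- Let q be any prime power. Then the weak normal covering number of PSL_4(q) equals 2: there exist two proper subgroups H and K of PSL_4(q) such that every element g of PSL_4(q) satisfies phi(g) in H or phi(g) in K for some automorphism phi of PSL_4(q), and no single proper subgroup L of PSL_4(q) has the property that every element of PSL_4(q) is mapped into L by some automorphism. -/

import Mathlib

/-- The projective special linear group `PSL_n(F)`: the quotient of `SL_n(F)` by its center. -/
abbrev ProjSL (n : ℕ) (F : Type*) [Field F] : Type _ :=
  Matrix.SpecialLinearGroup (Fin n) F ⧸
    Subgroup.center (Matrix.SpecialLinearGroup (Fin n) F)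

namespace PSLCov
open Matrix
open scoped Pointwise

variable {F : Type*} [Field F]

abbrev S (F : Type*) [Field F] := SpecialLinearGroup (Fin 4) F

abbrev mk (g : S F) : ProjSL 4 F := QuotientGroup.mk g

def bar (e : S F ≃* S F) : MulAut (ProjSL 4 F) :=
  QuotientGroup.congr _ _ e (Subgroup.characteristic_iff_map_eq.mp inferInstance e)

lemma bar_mk (e : S F ≃* S F) (g : S F) : bar e (mk g) = mk (e g) := rfl

lemma mk_surj (x : ProjSL 4 F) : ∃ g : S F, mk g = x := QuotientGroup.mk_surjective x

/-- the matrix of an element -/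
def mx : S F →* Matrix (Fin 4) (Fin 4) F := SpecialLinearGroup.coeMonoidHom

def mkS (M : Matrix (Fin 4) (Fin 4) F) (h : M.det = 1) : S F := ⟨M, h⟩

@[simp] lemma mx_mkS (M : Matrix (Fin 4) (Fin 4) F) (h : M.det = 1) : mx (mkS M h) = M := rfl

lemma mx_det (g : S F) : (mx g).det = 1 := g.2

lemma mx_inj {g h : S F} (e : mx g = mx h) : g = h := SpecialLinearGroup.coeMonoidHom_injective e

lemma mx_mul_inv (g : S F) : mx g * mx g⁻¹ = 1 := by rw [← map_mul, mul_inv_cancel, map_one]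
lemma mx_inv_mul (g : S F) : mx g⁻¹ * mx g = 1 := by rw [← map_mul, inv_mul_cancel, map_one]

def cj (P Q : Matrix (Fin 4) (Fin 4) F) (h : P * Q = 1) : S F ≃* S F where
  toFun g := mkS (P * mx g * Q) (by
    rw [det_mul, det_mul, mx_det, mul_one, ← det_mul, h, det_one])
  invFun g := mkS (Q * mx g * P) (by
    rw [det_mul, det_mul, mx_det, mul_one, ← det_mul, mul_eq_one_comm.mp h, det_one])
  left_inv g := by
    apply mx_inj
    have h' := mul_eq_one_comm.mp h
    simp only [mx_mkS]
    calc Q * (P * mx g * Q) * P = (Q * P) * mx g * (Q * P) := by simp only [mul_assoc]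
      _ = mx g := by rw [h']; simp
  right_inv g := by
    apply mx_inj
    simp only [mx_mkS]
    calc P * (Q * mx g * P) * Q = (P * Q) * mx g * (P * Q) := by simp only [mul_assoc]
      _ = mx g := by rw [h]; simp
  map_mul' a b := by
    apply mx_inj
    have h' := mul_eq_one_comm.mp h
    simp only [mx_mkS, map_mul]
    calc P * (mx a * mx b) * Q = P * mx a * 1 * (mx b * Q) := by simp [mul_assoc]
      _ = _ := by rw [← h']; simp only [mul_assoc]

lemma cj_coe (P Q : Matrix (Fin 4) (Fin 4) F) (h : P * Q = 1) (g : S F) :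
    mx (cj P Q h g) = P * mx g * Q := rfl

def tauF (g : S F) : S F := mkS (mx g⁻¹)ᵀ (by rw [det_transpose, mx_det])

lemma tauF_inv (g : S F) : (tauF g)⁻¹ = mkS (mx g)ᵀ (by rw [det_transpose, mx_det]) := by
  rw [inv_eq_iff_mul_eq_one]
  apply mx_inj
  rw [map_mul, tauF, mx_mkS, mx_mkS, ← transpose_mul, mx_mul_inv, transpose_one, map_one]

lemma tauF_tauF (g : S F) : tauF (tauF g) = g := by
  apply mx_inj
  rw [tauF, mx_mkS, tauF_inv, mx_mkS, transpose_transpose]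

def tau : S F ≃* S F where
  toFun g := tauF g
  invFun g := tauF g
  left_inv g := tauF_tauF g
  right_inv g := tauF_tauF g
  map_mul' a b := by
    apply mx_inj
    simp only [tauF, mx_mkS, map_mul, _root_.mul_inv_rev, transpose_mul]

lemma tau_coe (g : S F) : mx (tau g) = (mx g⁻¹)ᵀ := rfl

lemma tau_tau (g : S F) : tau (tau g) = g := tau.left_inv g

lemma bar_tau_tau : bar (tau : S F ≃* S F) * bar tau = 1 := by
  ext x
  obtain ⟨g, rfl⟩ := mk_surj x
  change bar tau (bar tau (mk g)) = mk g
  rw [bar_mk, bar_mk, tau_tau]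

lemma mk_eq {g h : S F} : mk g = mk h ↔ ∃ r : F, mx h = r • mx g := by
  rw [QuotientGroup.eq, Matrix.SpecialLinearGroup.mem_center_iff]
  constructor
  · rintro ⟨r, -, hr⟩
    refine ⟨r, ?_⟩
    have hr' : (scalar (Fin 4)) r = mx (g⁻¹ * h) := hr
    have : h = g * (g⁻¹ * h) := by group
    rw [this, map_mul, ← hr']
    simp [← Matrix.smul_one_eq_diagonal]
  · rintro ⟨r, hr⟩
    refine ⟨r, ?_, ?_⟩
    · have := mx_det h
      rw [hr, det_smul, mx_det] at this
      simpa using this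
    · change _ = mx (g⁻¹ * h)
      rw [map_mul, hr, Matrix.mul_smul, mx_inv_mul]
      simp [← Matrix.smul_one_eq_diagonal]

def tv (v f : Fin 4 → F) (h : f ⬝ᵥ v = 0) : S F :=
  mkS (1 + vecMulVec v f) (by
    rw [vecMulVec_eq Unit, det_one_add_replicateCol_mul_replicateRow, h, add_zero])

lemma tv_coe (v f : Fin 4 → F) (h : f ⬝ᵥ v = 0) : mx (tv v f h) = 1 + vecMulVec v f := rfl

lemma tv_mul (v f g : Fin 4 → F) (h : f ⬝ᵥ v = 0) (h' : g ⬝ᵥ v = 0) :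
    tv v f h * tv v g h' = tv v (f + g) (by rw [add_dotProduct, h, h', add_zero]) := by
  apply mx_inj
  rw [map_mul, tv_coe, tv_coe, tv_coe, vecMulVec_add, mul_add, add_mul, add_mul,
    vecMulVec_mul_vecMulVec, h]
  simp
  abel

lemma tv_mul' (v w f : Fin 4 → F) (h : f ⬝ᵥ v = 0) (h' : f ⬝ᵥ w = 0) :
    tv v f h * tv w f h' = tv (v + w) f (by rw [dotProduct_add, h, h', add_zero]) := by
  apply mx_inj
  rw [map_mul, tv_coe, tv_coe, tv_coe, add_vecMulVec, mul_add, add_mul, add_mul,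
    vecMulVec_mul_vecMulVec, h']
  simp
  abel

lemma tv_zero (v : Fin 4 → F) : tv v 0 (by simp) = 1 := by
  apply mx_inj
  simp [tv_coe]

lemma tv_inv (v f : Fin 4 → F) (h : f ⬝ᵥ v = 0) :
    (tv v f h)⁻¹ = tv v (-f) (by rw [neg_dotProduct, h, neg_zero]) := by
  rw [inv_eq_iff_mul_eq_one, tv_mul]
  apply mx_inj
  simp [tv_coe]

def T (v : Fin 4 → F) : Subgroup (S F) where
  carrier := {g | ∃ f h, g = tv v f h}
  mul_mem' := by
    rintro _ _ ⟨f, h, rfl⟩ ⟨g, h', rfl⟩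
    exact ⟨_, _, tv_mul ..⟩
  one_mem' := ⟨0, by simp, (tv_zero v).symm⟩
  inv_mem' := by
    rintro _ ⟨f, h, rfl⟩
    exact ⟨_, _, tv_inv ..⟩

def Tb (v : Fin 4 → F) : Subgroup (ProjSL 4 F) := (T v).map (QuotientGroup.mk' _)

/-- dual -/
def Td (f : Fin 4 → F) : Subgroup (ProjSL 4 F) := bar (tau : S F ≃* S F) • Tb f

lemma mem_Tb {v : Fin 4 → F} {x : ProjSL 4 F} : x ∈ Tb v ↔ ∃ f h, x = mk (tv v f h) := by
  constructor
  · rintro ⟨_, ⟨f, h, rfl⟩, rfl⟩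
    exact ⟨f, h, rfl⟩
  · rintro ⟨f, h, rfl⟩
    exact ⟨_, ⟨f, h, rfl⟩, rfl⟩

lemma tau_tv (v f : Fin 4 → F) (h : f ⬝ᵥ v = 0) :
    tau (tv v f h) = tv (-f) v (by rw [dotProduct_neg, dotProduct_comm, h, neg_zero]) := by
  apply mx_inj
  rw [tau_coe, tv_inv, tv_coe, tv_coe]
  simp [transpose_vecMulVec]

lemma mem_Td {f : Fin 4 → F} {x : ProjSL 4 F} : x ∈ Td f ↔ ∃ u h, x = mk (tv u f h) := by
  rw [Td, Subgroup.mem_smul_pointwise_iff_exists]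
  constructor
  · rintro ⟨y, hy, rfl⟩
    obtain ⟨g, h, rfl⟩ := mem_Tb.mp hy
    refine ⟨-g, ?_, ?_⟩
    · rw [dotProduct_neg, dotProduct_comm, h, neg_zero]
    · rw [← tau_tv _ _ h]; rfl
  · rintro ⟨u, h, rfl⟩
    have h' : -u ⬝ᵥ f = 0 := by rw [neg_dotProduct, dotProduct_comm, h, neg_zero]
    refine ⟨mk (tv f (-u) h'), mem_Tb.mpr ⟨_, h', rfl⟩, ?_⟩
    change bar tau (mk _) = _
    rw [bar_mk, tau_tv]
    congr 2; simp

def IsTr (x : ProjSL 4 F) : Prop := ∃ v f h, x = mk (tv v f h)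

lemma exists_killed (f g h : Fin 4 → F) :
    ∃ u : Fin 4 → F, u ≠ 0 ∧ f ⬝ᵥ u = 0 ∧ g ⬝ᵥ u = 0 ∧ h ⬝ᵥ u = 0 := by
  obtain ⟨u, hu, h0⟩ := (Submodule.ne_bot_iff _).mp
    (LinearMap.ker_ne_bot_of_finrank_lt (f := (Matrix.of ![f, g, h]).mulVecLin) (by simp))
  have h1 := congrFun (LinearMap.mem_ker.mp hu)
  refine ⟨u, h0, ?_, ?_, ?_⟩
  · simpa [mulVec] using h1 0
  · simpa [mulVec] using h1 1
  · simpa [mulVec] using h1 2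

lemma vmv_mulVec (v f u : Fin 4 → F) : vecMulVec v f *ᵥ u = (f ⬝ᵥ u) • v := by
  rw [vecMulVec_mulVec]; ext i; simp [mul_comm]

lemma tv_fix {v f u : Fin 4 → F} (h : f ⬝ᵥ v = 0) (hu : f ⬝ᵥ u = 0) : mx (tv v f h) *ᵥ u = u := by
  rw [tv_coe, add_mulVec, vmv_mulVec, hu]; simp

lemma smul_eq_self_one {r : F} {u : Fin 4 → F} (hu : u ≠ 0) (h : u = r • u) : r = 1 := by
  have : (r - 1) • u = 0 := by rw [sub_smul, ← h]; simp
  rcases smul_eq_zero.mp this with h | h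
  · linear_combination h
  · exact absurd h hu

lemma mk_tv_eq {v f w g : Fin 4 → F} {h : f ⬝ᵥ v = 0} {h' : g ⬝ᵥ w = 0}
    (he : mk (tv v f h) = mk (tv w g h')) : vecMulVec v f = vecMulVec w g := by
  obtain ⟨r, hr⟩ := mk_eq.mp he
  obtain ⟨u, hu, h1, h2, -⟩ := exists_killed f g 0
  have := congrArg (· *ᵥ u) hr
  simp only [smul_mulVec, tv_fix h h1, tv_fix h' h2] at this
  rw [smul_eq_self_one hu this, one_smul, tv_coe, tv_coe] at hr
  exact (add_left_cancel hr).symm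

lemma tv_coe_inj {v f w g : Fin 4 → F} {h : f ⬝ᵥ v = 0} {h' : g ⬝ᵥ w = 0}
    (he : vecMulVec v f = vecMulVec w g) : tv v f h = tv w g h' := by
  apply mx_inj; rw [tv_coe, tv_coe, he]

lemma mk_tv_eq_one {v f : Fin 4 → F} {h : f ⬝ᵥ v = 0}
    (he : mk (tv v f h) = 1) : vecMulVec v f = 0 := by
  have : mk (tv v f h) = mk (tv v 0 (by simp)) := by rw [he, tv_zero]; rfl
  simpa using mk_tv_eq this

lemma vmv_eq_left {v f w g : Fin 4 → F} (hv : v ≠ 0) (hf : f ≠ 0)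
    (he : vecMulVec v f = vecMulVec w g) : ∃ c : F, c ≠ 0 ∧ w = c • v := by
  obtain ⟨j, hj⟩ := Function.ne_iff.mp hf
  obtain ⟨i, hi⟩ := Function.ne_iff.mp hv
  simp only [Pi.zero_apply] at hi hj
  have key (i) : v i * f j = w i * g j := by
    have := congrFun (congrFun he i) j
    simpa [vecMulVec_apply] using this
  have hg : g j ≠ 0 := fun h => by
    have := key i
    rw [h, mul_zero] at this
    exact (mul_ne_zero hi hj) this
  refine ⟨f j / g j, div_ne_zero hj hg, ?_⟩
  ext k
  have := key k
  simp only [Pi.smul_apply, smul_eq_mul]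
  field_simp
  linear_combination -this

lemma vmv_eq_right {v f w g : Fin 4 → F} (hv : v ≠ 0) (hf : f ≠ 0)
    (he : vecMulVec v f = vecMulVec w g) : ∃ c : F, c ≠ 0 ∧ g = c • f := by
  apply vmv_eq_left hf hv (w := g) (g := w)
  rw [← transpose_vecMulVec, he, transpose_vecMulVec]

lemma vmv_ne_zero {v f : Fin 4 → F} : vecMulVec v f ≠ 0 ↔ v ≠ 0 ∧ f ≠ 0 := by
  rw [Ne, vecMulVec_eq_zero, not_or]

lemma exists_dual {ι : Type*} {x : ι → Fin 4 → F} (hli : LinearIndependent F x) (a : ι → F) :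
    ∃ α : Fin 4 → F, ∀ i, α ⬝ᵥ x i = a i := by
  obtain ⟨φ, hφ⟩ := (Module.Basis.span hli).constr F a |>.exists_extend
  refine ⟨fun i => φ (Pi.single i 1), fun i => ?_⟩
  have h1 := congrArg (fun ψ => ψ ((Module.Basis.span hli) i)) hφ
  simp only [Module.Basis.constr_basis] at h1
  simp only [LinearMap.comp_apply, Submodule.subtype_apply, Module.Basis.span_apply] at h1
  rw [← h1, LinearMap.pi_apply_eq_sum_univ φ (x i)]
  simp only [dotProduct, smul_eq_mul, mul_comm]
  refine Finset.sum_congr rfl fun j _ => ?_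
  congr 2
  ext k
  simp [Pi.single_apply, eq_comm]

lemma tv_pair {v f w g u k : Fin 4 → F} {h : f ⬝ᵥ v = 0} {h' : g ⬝ᵥ w = 0} {h'' : k ⬝ᵥ u = 0}
    (he : mk (tv v f h) * mk (tv w g h') = mk (tv u k h'')) (hv : v ≠ 0) (hg : g ≠ 0) :
    (∃ c : F, w = c • v) ∨ (∃ c : F, f = c • g) := by
  obtain ⟨r, hr⟩ := (mk_eq (g := tv v f h * tv w g h')).mp he
  obtain ⟨x, hx, h1, h2, h3⟩ := exists_killed f g k
  have := congrArg (· *ᵥ x) hr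
  simp only [smul_mulVec, map_mul, ← mulVec_mulVec, tv_fix h h1, tv_fix h' h2,
    tv_fix h'' h3] at this
  rw [smul_eq_self_one hx this, one_smul, map_mul, tv_coe, tv_coe, tv_coe,
    mul_add, add_mul, add_mul, vecMulVec_mul_vecMulVec] at hr
  simp only [mul_one, one_mul, add_assoc, add_right_inj] at hr
  by_contra! hc
  obtain ⟨hc1, hc2⟩ := hc
  -- independent v, w
  have hli : LinearIndependent F ![v, w] := by
    rw [LinearIndependent.pair_iff' hv]
    intro a ha
    exact hc1 a ha.symm
  -- functional dual to these
  have hex : ∀ a b : F, ∃ α : Fin 4 → F, α ⬝ᵥ v = a ∧ α ⬝ᵥ w = b := by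
    intro a b
    obtain ⟨α, hα⟩ := exists_dual hli ![a, b]
    exact ⟨α, hα 0, hα 1⟩
  obtain ⟨α, hα1, hα2⟩ := hex 1 0
  obtain ⟨β, hβ1, hβ2⟩ := hex 0 1
  have e1 := congrArg (α ᵥ* ·) hr
  have e2 := congrArg (β ᵥ* ·) hr
  simp only [vecMul_add, vecMul_vecMulVec, hα1, hα2, hβ1, hβ2,
    vecMul_smul, vecMulVec_smul] at e1 e2
  simp at e1 e2
  have hb : β ⬝ᵥ u ≠ 0 := by
    intro h0
    rw [h0] at e2
    exact hg (by simpa using e2.symm)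
  apply hc2 ((α ⬝ᵥ u) / (β ⬝ᵥ u) - f ⬝ᵥ w)
  rw [sub_smul, div_eq_mul_inv, mul_smul, eq_sub_iff_add_eq]
  rw [← e1, ← e2, smul_smul (β ⬝ᵥ u)⁻¹, inv_mul_cancel₀ hb, one_smul]
end PSLCov

namespace PSLCov
open Matrix
open scoped Pointwise

variable {F : Type*} [Field F]

lemma mem_Tb_of {v w f : Fin 4 → F} (h : f ⬝ᵥ w = 0) {c : F} (hw : w = c • v) (hw0 : w ≠ 0) :
    mk (tv w f h) ∈ Tb v := by
  have hc : c ≠ 0 := by rintro rfl; simp at hw; exact hw0 hw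
  refine mem_Tb.mpr ⟨c • f, ?_, ?_⟩
  · rw [hw, dotProduct_smul] at h
    simpa using h
  · congr 1
    apply tv_coe_inj
    rw [hw]; simp

lemma mem_Td_of {v f g : Fin 4 → F} (h : f ⬝ᵥ v = 0) {c : F} (hf : f = c • g) (hf0 : f ≠ 0) :
    mk (tv v f h) ∈ Td g := by
  have hc : c ≠ 0 := by rintro rfl; simp at hf; exact hf0 hf
  refine mem_Td.mpr ⟨c • v, ?_, ?_⟩
  · rw [hf, smul_dotProduct] at h
    simpa using h
  · congr 1
    apply tv_coe_inj
    rw [hf]; simp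

lemma inv_par {v w : Fin 4 → F} {c : F} (h : w = c • v) (hw : w ≠ 0) : ∃ d : F, v = d • w := by
  have hc : c ≠ 0 := by rintro rfl; simp at h; exact hw h
  exact ⟨c⁻¹, by rw [h, smul_smul, inv_mul_cancel₀ hc, one_smul]⟩

lemma isTr_rep {x : ProjSL 4 F} (hx : IsTr x) (h1 : x ≠ 1) :
    ∃ v f h, x = mk (tv v f h) ∧ v ≠ 0 ∧ f ≠ 0 := by
  obtain ⟨v, f, h, rfl⟩ := hx
  refine ⟨v, f, h, rfl, ?_⟩
  rw [← vmv_ne_zero]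
  intro h0
  apply h1
  have : tv v f h = 1 := by apply mx_inj; rw [tv_coe, h0]; simp
  rw [this]; rfl

def TrSub (X : Subgroup (ProjSL 4 F)) : Prop := ∀ x ∈ X, IsTr x

lemma trSub_Tb (v : Fin 4 → F) : TrSub (Tb v) := by
  intro x hx
  obtain ⟨f, h, rfl⟩ := mem_Tb.mp hx
  exact ⟨_, _, _, rfl⟩

lemma trSub_Td (v : Fin 4 → F) : TrSub (Td v) := by
  intro x hx
  obtain ⟨f, h, rfl⟩ := mem_Td.mp hx
  exact ⟨_, _, _, rfl⟩

def e0 : Fin 4 → F := Pi.single 0 1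

lemma e0_ne : (e0 : Fin 4 → F) ≠ 0 := by simp [e0]

lemma tr_sub {X : Subgroup (ProjSL 4 F)} (hX : TrSub X) :
    (∃ v, v ≠ 0 ∧ X ≤ Tb v) ∨ (∃ f, f ≠ 0 ∧ X ≤ Td f) := by
  by_cases hbot : X = ⊥
  · left; exact ⟨e0, e0_ne, by rw [hbot]; exact bot_le⟩
  obtain ⟨x1, hx1, hx1'⟩ : ∃ x ∈ X, x ≠ 1 := by
    obtain ⟨a, ha⟩ := (Subgroup.ne_bot_iff_exists_ne_one).mp hbot
    exact ⟨a.1, a.2, fun h => ha (Subtype.ext h)⟩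
  obtain ⟨v, f, h, rfl, hv, hf⟩ := isTr_rep (hX _ hx1) hx1'
  by_cases hall : X ≤ Tb v
  · exact Or.inl ⟨v, hv, hall⟩
  right
  obtain ⟨x2, hx2, hx2'⟩ := SetLike.not_le_iff_exists.mp hall
  have hx21 : x2 ≠ 1 := by rintro rfl; exact hx2' (one_mem _)
  obtain ⟨w, g, h', rfl, hw, hg⟩ := isTr_rep (hX _ hx2) hx21
  have hvw : ∀ c : F, w ≠ c • v := fun c hc => hx2' (mem_Tb_of h' hc hw)
  have pair : ∀ {v f w g : Fin 4 → F} {h : f ⬝ᵥ v = 0} {h' : g ⬝ᵥ w = 0}, mk (tv v f h) ∈ X →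
      mk (tv w g h') ∈ X → v ≠ 0 → g ≠ 0 → (∃ c : F, w = c • v) ∨ (∃ c : F, f = c • g) := by
    intro v f w g h h' h1 h2 hv hg
    obtain ⟨_, _, _, he⟩ := hX _ (mul_mem h1 h2)
    exact tv_pair he hv hg
  obtain ⟨c, hc⟩ : ∃ c : F, f = c • g := by
    rcases pair hx1 hx2 hv hg with ⟨c, hc⟩ | hc
    · exact absurd hc (hvw c)
    · exact hc
  refine ⟨g, hg, fun x3 hx3 => ?_⟩
  by_cases hx31 : x3 = 1
  · rw [hx31]; exact one_mem _
  obtain ⟨u, k, h'', rfl, hu, hk⟩ := isTr_rep (hX _ hx3) hx31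
  rcases pair hx2 hx3 hw hk with ⟨a, ha⟩ | ⟨a, ha⟩
  · rcases pair hx1 hx3 hv hk with ⟨b, hb⟩ | ⟨b, hb⟩
    · obtain ⟨d, hd⟩ := inv_par ha hu
      exact absurd (by rw [hd, hb, smul_smul]) (hvw (d * b))
    · obtain ⟨d, hd⟩ := inv_par hb hf
      exact mem_Td_of (c := d * c) h'' (by rw [hd, hc, smul_smul]) hk
  · obtain ⟨d, hd⟩ := inv_par ha hg
    exact mem_Td_of h'' hd hk

lemma tb_le {v w : Fin 4 → F} (hv : v ≠ 0) (h : Tb v ≤ Tb w) : ∃ c : F, c ≠ 0 ∧ w = c • v := by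
  obtain ⟨f, hf, h1, -⟩ := exists_killed v 0 0
  rw [dotProduct_comm] at h1
  obtain ⟨g, h2, h3⟩ := mem_Tb.mp (h (mem_Tb.mpr ⟨f, h1, rfl⟩))
  exact vmv_eq_left hv hf (mk_tv_eq h3)

lemma tb_not_le {v g : Fin 4 → F} (hv : v ≠ 0) (h : Tb v ≤ Td g) : False := by
  obtain ⟨f, hf, h1, -⟩ := exists_killed v 0 0
  obtain ⟨i, hi⟩ := Function.ne_iff.mp hf
  obtain ⟨f', hf', h1', h1'', -⟩ := exists_killed v (Pi.single i 1) 0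
  rw [dotProduct_comm] at h1 h1'
  simp at h1'' hi
  obtain ⟨u, h2, h3⟩ := mem_Td.mp (h (mem_Tb.mpr ⟨f, h1, rfl⟩))
  obtain ⟨u', h2', h3'⟩ := mem_Td.mp (h (mem_Tb.mpr ⟨f', h1', rfl⟩))
  obtain ⟨c, hc, e⟩ := vmv_eq_right hv hf (mk_tv_eq h3)
  obtain ⟨c', hc', e'⟩ := vmv_eq_right hv hf' (mk_tv_eq h3')
  have := congrFun (e.symm.trans e') i
  simp [h1''] at this
  tauto

lemma tb_smul {v : Fin 4 → F} {c : F} (hc : c ≠ 0) : Tb (c • v) = Tb v := by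
  by_cases hv : v = 0
  · simp [hv]
  apply le_antisymm
  · intro x hx
    obtain ⟨f, h, rfl⟩ := mem_Tb.mp hx
    exact mem_Tb_of h rfl (smul_ne_zero hc hv)
  · intro x hx
    obtain ⟨f, h, rfl⟩ := mem_Tb.mp hx
    exact mem_Tb_of (c := c⁻¹) h (by rw [smul_smul, inv_mul_cancel₀ hc, one_smul]) hv

def IsOm (X : Subgroup (ProjSL 4 F)) : Prop := TrSub X ∧ ∀ Y, TrSub Y → X ≤ Y → Y ≤ X

lemma isOm_Tb {v : Fin 4 → F} (hv : v ≠ 0) : IsOm (Tb v) := by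
  refine ⟨trSub_Tb v, fun Y hY hle => ?_⟩
  rcases tr_sub hY with ⟨w, hw, h⟩ | ⟨g, hg, h⟩
  · obtain ⟨c, hc, rfl⟩ := tb_le hv (hle.trans h)
    rwa [tb_smul hc] at h
  · exact (tb_not_le hv (hle.trans h)).elim

lemma om_cases {X : Subgroup (ProjSL 4 F)} (hX : IsOm X) :
    (∃ v, v ≠ 0 ∧ X = Tb v) ∨ (∃ f, f ≠ 0 ∧ X = Td f) := by
  rcases tr_sub hX.1 with ⟨w, hw, h⟩ | ⟨g, hg, h⟩
  · exact Or.inl ⟨w, hw, le_antisymm h (hX.2 _ (trSub_Tb _) h)⟩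
  · exact Or.inr ⟨g, hg, le_antisymm h (hX.2 _ (trSub_Td _) h)⟩

lemma trSub_smul (hA : ∀ (φ : MulAut (ProjSL 4 F)) x, IsTr x → IsTr (φ x))
    (φ : MulAut (ProjSL 4 F)) {X : Subgroup (ProjSL 4 F)} (hX : TrSub X) : TrSub (φ • X) := by
  intro x hx
  obtain ⟨y, hy, rfl⟩ := Subgroup.mem_smul_pointwise_iff_exists _ _ _ |>.mp hx
  exact hA φ y (hX y hy)

lemma isOm_smul (hA : ∀ (φ : MulAut (ProjSL 4 F)) x, IsTr x → IsTr (φ x))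
    (φ : MulAut (ProjSL 4 F)) {X : Subgroup (ProjSL 4 F)} (hX : IsOm X) : IsOm (φ • X) := by
  refine ⟨trSub_smul hA φ hX.1, fun Y hY h => ?_⟩
  have := hX.2 (φ⁻¹ • Y) (trSub_smul hA _ hY) (Subgroup.subset_pointwise_smul_iff.mpr (by simpa using h))
  exact Subgroup.subset_pointwise_smul_iff.mpr this

lemma cj_tv (P Q : Matrix (Fin 4) (Fin 4) F) (hPQ : P * Q = 1) (v f : Fin 4 → F) (h : f ⬝ᵥ v = 0) :
    cj P Q hPQ (tv v f h) = tv (P *ᵥ v) (f ᵥ* Q) (by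
      rw [← dotProduct_mulVec, mulVec_mulVec, mul_eq_one_comm.mp hPQ, one_mulVec, h]) := by
  apply mx_inj
  rw [cj_coe, tv_coe, tv_coe, mul_add, add_mul, mul_one, hPQ, mul_vecMulVec, vecMulVec_mul]

lemma bar_cj_tb (P Q : Matrix (Fin 4) (Fin 4) F) (hPQ : P * Q = 1) (v : Fin 4 → F) :
    bar (cj P Q hPQ) • Tb v = Tb (P *ᵥ v) := by
  have hQP := mul_eq_one_comm.mp hPQ
  ext x
  rw [Subgroup.mem_smul_pointwise_iff_exists, mem_Tb]
  constructor
  · rintro ⟨y, hy, rfl⟩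
    obtain ⟨f, h, rfl⟩ := mem_Tb.mp hy
    refine ⟨f ᵥ* Q, ?_, ?_⟩
    · rw [← dotProduct_mulVec, mulVec_mulVec, hQP, one_mulVec, h]
    · change bar _ (mk _) = _
      rw [bar_mk, cj_tv]
  · rintro ⟨f, h, rfl⟩
    have h' : f ᵥ* P ⬝ᵥ v = 0 := by rw [← dotProduct_mulVec, h]
    refine ⟨mk (tv v (f ᵥ* P) h'), mem_Tb.mpr ⟨_, _, rfl⟩, ?_⟩
    change bar _ (mk _) = _
    rw [bar_mk, cj_tv]
    congr 1
    apply tv_coe_inj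
    rw [vecMul_vecMul, hPQ, vecMul_one]

lemma conj_eq (g : S F) : MulAut.conj (mk g) = bar (cj (mx g) (mx g⁻¹) (mx_mul_inv g)) := by
  ext x
  obtain ⟨h, rfl⟩ := mk_surj x
  rw [bar_mk, MulAut.conj_apply]
  change mk (g * h * g⁻¹) = _
  congr 1

lemma conj_tb (g : S F) (v : Fin 4 → F) : MulAut.conj (mk g) • Tb v = Tb (mx g *ᵥ v) := by
  rw [conj_eq, bar_cj_tb]

lemma aut_conj {G : Type*} [Group G] (φ : MulAut G) (x : G) :
    MulAut.conj (φ x) = φ * MulAut.conj x * φ⁻¹ := by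
  ext y
  simp [MulAut.conj_apply]

lemma conj_td (g : S F) (f : Fin 4 → F) : MulAut.conj (mk g) • Td f = Td (mx (tau g) *ᵥ f) := by
  have h : mk g = bar tau (mk (tau g)) := by rw [bar_mk, tau_tau]
  have h2 : (bar tau : MulAut (ProjSL 4 F))⁻¹ * bar tau = 1 := by simp
  rw [h, aut_conj, Td, smul_smul, mul_assoc, h2, mul_one, mul_smul, conj_tb, Td]

lemma mulVec_ne {P Q : Matrix (Fin 4) (Fin 4) F} (h : P * Q = 1) {v : Fin 4 → F} (hv : v ≠ 0) :
    P *ᵥ v ≠ 0 := by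
  intro h0
  apply hv
  rw [← one_mulVec v, ← mul_eq_one_comm.mp h, ← mulVec_mulVec, h0, mulVec_zero]

end PSLCov

namespace PSLCov
open Matrix
open scoped Pointwise

variable {F : Type*} [Field F]

def e3 : Fin 4 → F := Pi.single 3 1

lemma e30 : (e3 : Fin 4 → F) ⬝ᵥ e0 = 0 := by simp [e3, e0]

def uM (t : Fin 6 → F) : Matrix (Fin 4) (Fin 4) F :=
  !![1, t 0, t 1, t 2; 0, 1, t 3, t 4; 0, 0, 1, t 5; 0, 0, 0, 1]

lemma uM_mul (s t : Fin 6 → F) : uM s * uM t = uM ![s 0 + t 0, s 1 + t 1 + s 0 * t 3,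
    s 2 + t 2 + s 0 * t 4 + s 1 * t 5, s 3 + t 3, s 4 + t 4 + s 3 * t 5, s 5 + t 5] := by
  ext i j
  fin_cases i <;> fin_cases j <;> simp [uM, Matrix.mul_apply, Fin.sum_univ_four] <;> ring

lemma uM_det (t : Fin 6 → F) : (uM t).det = 1 := by
  rw [Matrix.det_of_isUpperTriangular]
  · simp [uM, Fin.prod_univ_four]
  · intro i j h
    fin_cases i <;> fin_cases j <;> simp [uM] at h ⊢

lemma uM_zero : uM (0 : Fin 6 → F) = 1 := by
  ext i j
  fin_cases i <;> fin_cases j <;> simp [uM]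

def uS (t : Fin 6 → F) : S F := mkS (uM t) (uM_det t)

lemma uS_mul (s t : Fin 6 → F) : uS s * uS t = uS ![s 0 + t 0, s 1 + t 1 + s 0 * t 3,
    s 2 + t 2 + s 0 * t 4 + s 1 * t 5, s 3 + t 3, s 4 + t 4 + s 3 * t 5, s 5 + t 5] := by
  apply mx_inj
  rw [map_mul]
  exact uM_mul s t

lemma uS_zero : uS (0 : Fin 6 → F) = 1 := by
  apply mx_inj
  rw [map_one]
  exact uM_zero

def ub : Subgroup (ProjSL 4 F) where
  carrier := Set.range fun t => mk (uS t)
  one_mem' := ⟨0, congrArg mk uS_zero⟩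
  mul_mem' := by
    rintro _ _ ⟨s, rfl⟩ ⟨t, rfl⟩
    exact ⟨_, (congrArg mk (uS_mul s t).symm)⟩
  inv_mem' := by
    rintro _ ⟨t, rfl⟩
    refine ⟨![-t 0, -t 1 + t 0 * t 3, -t 2 + t 0 * t 4 + t 1 * t 5 - t 0 * t 3 * t 5,
      - t 3, - t 4 + t 3 * t 5, - t 5], ?_⟩
    rw [eq_comm, inv_eq_iff_mul_eq_one]
    change mk (uS t * _) = mk 1
    congr 1
    rw [uS_mul, ← uS_zero]
    congr 1
    ext i
    fin_cases i <;> simp <;> ring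

lemma mk_uS_inj : Function.Injective fun t : Fin 6 → F => mk (uS t) := by
  intro s t h
  obtain ⟨r, hr⟩ := mk_eq.mp h
  simp only [uS, mx_mkS] at hr
  have key := fun i j => congrFun (congrFun hr i) j
  have h0 := key 0 0
  simp [uM] at h0
  subst h0
  have a0 := key 0 1
  have a1 := key 0 2
  have a2 := key 0 3
  have a3 := key 1 2
  have a4 := key 1 3
  have a5 := key 2 3
  simp [uM] at a0 a1 a2 a3 a4 a5
  ext i
  fin_cases i <;> simp [*]

lemma ub_card : Nat.card (ub : Subgroup (ProjSL 4 F)) = Nat.card F ^ 6 := by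
  have := Nat.card_range_of_injective (mk_uS_inj (F := F))
  rw [Nat.card_fun] at this
  rw [Nat.card_fin] at this
  exact this

lemma z_eq (a : F) (h) : tv e0 (a • e3) h = uS ![0, 0, a, 0, 0, 0] := by
  apply mx_inj
  rw [tv_coe, uS, mx_mkS]
  ext i j
  fin_cases i <;> fin_cases j <;> simp [uM, e0, e3, vecMulVec_apply]

lemma z_central (a : F) (y : ProjSL 4 F) (hy : y ∈ ub) :
    mk (uS ![0, 0, a, 0, 0, 0]) * y = y * mk (uS ![0, 0, a, 0, 0, 0]) := by
  obtain ⟨t, rfl⟩ := hy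
  change mk (_ * _) = mk (_ * _)
  congr 1
  rw [uS_mul, uS_mul]
  congr 1
  ext i
  fin_cases i <;> simp <;> ring

lemma ub_center {x : ProjSL 4 F} (hx : x ∈ ub) (h : ∀ y ∈ ub, x * y = y * x) :
    ∃ a : F, x = mk (uS ![0, 0, a, 0, 0, 0]) := by
  obtain ⟨t, rfl⟩ := hx
  have key : ∀ s : Fin 6 → F, _ := fun s => by
    have := h _ ⟨s, rfl⟩
    change mk (_ * _) = mk (_ * _) at this
    rw [uS_mul, uS_mul] at this
    exact mk_uS_inj this
  have k1 := key ![1, 0, 0, 0, 0, 0]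
  have k2 := key ![0, 0, 0, 1, 0, 0]
  have k3 := key ![0, 0, 0, 0, 0, 1]
  refine ⟨t 2, congrArg (fun t => mk (uS t)) ?_⟩
  have a1 := congrFun k1 1
  have a2 := congrFun k1 2
  have b1 := congrFun k2 1
  have b2 := congrFun k2 4
  have c1 := congrFun k3 2
  have c2 := congrFun k3 4
  simp at a1 a2 b1 b2 c1 c2
  ext i
  fin_cases i <;> simp [*]

lemma ub_index [Finite F] {p : ℕ} (hp : p.Prime) (hpF : p ∣ Nat.card F) :
    ¬ p ∣ (ub : Subgroup (ProjSL 4 F)).index := by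
  intro hdvd
  have := Fintype.ofFinite F
  set q := Nat.card F with hq
  have hq1 : 1 < q := Finite.one_lt_card
  have h1 : q ^ 6 * (ub : Subgroup (ProjSL 4 F)).index = Nat.card (ProjSL 4 F) := by
    rw [← ub_card]; exact Subgroup.card_mul_index _
  have h2 : Nat.card (ProjSL 4 F) ∣ Nat.card (S F) :=
    Subgroup.card_quotient_dvd_card _
  have h3 : Nat.card (S F) ∣ Nat.card (GL (Fin 4) F) :=
    Subgroup.card_dvd_of_injective (SpecialLinearGroup.toGL) SpecialLinearGroup.toGL_injective
  rw [Matrix.card_GL_field, ← Nat.card_eq_fintype_card, ← hq] at h3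
  have h4 : ∏ i : Fin 4, (q ^ 4 - q ^ (i : ℕ)) =
      q ^ 6 * ((q ^ 4 - 1) * (q ^ 3 - 1) * (q ^ 2 - 1) * (q - 1)) := by
    have e1 : q ^ 4 - q = q * (q ^ 3 - 1) := by rw [Nat.mul_sub]; ring_nf
    have e2 : q ^ 4 - q ^ 2 = q ^ 2 * (q ^ 2 - 1) := by rw [Nat.mul_sub]; ring_nf
    have e3 : q ^ 4 - q ^ 3 = q ^ 3 * (q - 1) := by rw [Nat.mul_sub]; ring_nf
    simp only [Fin.prod_univ_four]
    simp only [Fin.val_zero, Fin.val_one, Fin.val_two, pow_zero, pow_one]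
    rw [show ((3 : Fin 4) : ℕ) = 3 from rfl, e1, e2, e3]
    ring
  rw [h4] at h3
  have h5 := h1 ▸ (h2.trans h3)
  have h6 := hdvd.trans (Nat.dvd_of_mul_dvd_mul_left (by positivity) h5)
  have key : ∀ k, k ≠ 0 → ¬ p ∣ q ^ k - 1 := by
    intro k hk hd
    have : p ∣ q ^ k := dvd_pow hpF hk
    have h1 : 1 ≤ q ^ k := Nat.one_le_pow _ _ (by omega)
    have := (Nat.dvd_sub this hd)
    rw [Nat.sub_sub_self h1] at this
    exact hp.one_lt.ne' (Nat.dvd_one.mp this)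
  rcases (hp.dvd_mul).mp h6 with h6 | h6
  · rcases (hp.dvd_mul).mp h6 with h6 | h6
    · rcases (hp.dvd_mul).mp h6 with h6 | h6
      · exact key 4 (by norm_num) h6
      · exact key 3 (by norm_num) h6
    · exact key 2 (by norm_num) h6
  · exact key 1 (by norm_num) (by simpa using h6)

lemma exists_P {v f : Fin 4 → F} (h : f ⬝ᵥ v = 0) (hv : v ≠ 0) (hf : f ≠ 0) :
    ∃ P Q : Matrix (Fin 4) (Fin 4) F, P * Q = 1 ∧ P *ᵥ e0 = v ∧ f ᵥ* P = e3 := by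
  obtain ⟨i0, hi0⟩ := Function.ne_iff.mp hf
  obtain ⟨j0, hj0⟩ := Function.ne_iff.mp hv
  simp at hi0 hj0
  set w : Fin 4 → F := Pi.single i0 (f i0)⁻¹ with hw
  have hfw : f ⬝ᵥ w = 1 := by simp [hw, hi0]
  obtain ⟨α, hα1, hα2⟩ : ∃ α : Fin 4 → F, α ⬝ᵥ v = 1 ∧ α ⬝ᵥ w = 0 := by
    refine ⟨(v j0)⁻¹ • (Pi.single j0 1 - w j0 • f), ?_, ?_⟩
    · simp [sub_dotProduct, h, hj0]
    · simp [sub_dotProduct, hfw]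
  obtain ⟨k1, hk1, f1, g1, -⟩ := exists_killed f α 0
  obtain ⟨i, hi⟩ := Function.ne_iff.mp hk1
  obtain ⟨k2, hk2, f2, g2, i2⟩ := exists_killed f α (Pi.single i 1)
  simp at i2 hi
  set P : Matrix (Fin 4) (Fin 4) F := (Matrix.of ![v, k1, k2, w])ᵀ with hP
  have hPv : ∀ c, P *ᵥ c = c 0 • v + c 1 • k1 + c 2 • k2 + c 3 • w := by
    intro c
    ext j
    simp [hP, mulVec, dotProduct, Fin.sum_univ_four]
    ring
  have hinj : ∀ c, P *ᵥ c = 0 → c = 0 := by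
    intro c hc
    rw [hPv] at hc
    have a3 := congrArg (fun x => f ⬝ᵥ x) hc
    have a0 := congrArg (fun x => α ⬝ᵥ x) hc
    simp [dotProduct_add, h, f1, f2, hfw, hα1, hα2, g1, g2] at a3 a0
    simp [a3, a0] at hc
    have a1 := congrFun hc i
    simp [i2, hi] at a1
    simp [a1, hk2] at hc
    ext j
    fin_cases j <;> simp [*]
  have hdet : P.det ≠ 0 := by
    intro hd
    obtain ⟨c, hc, hc'⟩ := Matrix.exists_mulVec_eq_zero_iff.mpr hd
    exact hc (hinj c hc')
  refine ⟨P, P⁻¹, Matrix.mul_nonsing_inv _ (isUnit_iff_ne_zero.mpr hdet), ?_, ?_⟩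
  · rw [hPv]; simp [e0]
  · ext j
    have : (f ᵥ* P) j = f ⬝ᵥ (![v, k1, k2, w] j) := rfl
    rw [this]
    fin_cases j <;> simp [e3, h, f1, f2, hfw]

lemma tv_std {v f : Fin 4 → F} (h : f ⬝ᵥ v = 0) (hv : v ≠ 0) (hf : f ≠ 0) :
    ∃ e : S F ≃* S F, tv v f h = e (uS ![0, 0, 1, 0, 0, 0]) := by
  obtain ⟨P, Q, hPQ, h1, h2⟩ := exists_P h hv hf
  refine ⟨cj P Q hPQ, ?_⟩
  rw [← z_eq 1 (by rw [one_smul]; exact e30), cj_tv]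
  apply tv_coe_inj
  rw [h1, one_smul, ← h2, vecMul_vecMul, hPQ, vecMul_one]

theorem hA [Finite F] (φ : MulAut (ProjSL 4 F)) (x : ProjSL 4 F) (hx : IsTr x) : IsTr (φ x) := by
  by_cases hx1 : x = 1
  · rw [hx1, map_one, ← hx1]; exact hx
  obtain ⟨v, f, h, rfl, hv, hf⟩ := isTr_rep hx hx1
  obtain ⟨e, he⟩ := tv_std h hv hf
  rw [he, ← bar_mk]
  set ψ : MulAut (ProjSL 4 F) := φ * bar e with hψ
  change IsTr (ψ (mk (uS ![0, 0, 1, 0, 0, 0])))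
  have := Fintype.ofFinite F
  obtain ⟨p, k, hp, hk, hq⟩ := (isPrimePow_nat_iff _).mp (FiniteField.isPrimePow_card F)
  rw [← Nat.card_eq_fintype_card] at hq
  have : Fact p.Prime := ⟨hp⟩
  have hpg : IsPGroup p (ub : Subgroup (ProjSL 4 F)) := by
    apply IsPGroup.of_card (n := k * 6)
    rw [ub_card, ← hq, pow_mul]
  have hpF : p ∣ Nat.card F := by rw [← hq]; exact dvd_pow_self p hk.ne'
  let P : Sylow p (ProjSL 4 F) := hpg.toSylow (ub_index hp hpF)
  obtain ⟨g, hg⟩ := MulAction.exists_smul_eq (ProjSL 4 F) P (ψ • P)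
  have hg' : MulAut.conj g • (ub : Subgroup (ProjSL 4 F)) = ψ • ub := congrArg Sylow.toSubgroup hg
  have hz : mk (uS ![0, 0, 1, 0, 0, 0]) ∈ (ub : Subgroup (ProjSL 4 F)) := ⟨_, rfl⟩
  set z : ProjSL 4 F := mk (uS ![0, 0, 1, 0, 0, 0]) with hzd
  have h1 : g⁻¹ * ψ z * g ∈ (ub : Subgroup (ProjSL 4 F)) := by
    have : ψ z ∈ ψ • (ub : Subgroup (ProjSL 4 F)) := Subgroup.smul_mem_pointwise_smul _ _ _ hz
    rw [← hg'] at this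
    obtain ⟨y, hy, hy'⟩ := (Subgroup.mem_smul_pointwise_iff_exists _ _ _).mp this
    rw [← hy']
    simpa [mul_assoc] using hy
  have h2 : ∀ y ∈ (ub : Subgroup (ProjSL 4 F)), (g⁻¹ * ψ z * g) * y = y * (g⁻¹ * ψ z * g) := by
    intro y hy
    have : MulAut.conj g • y ∈ MulAut.conj g • (ub : Subgroup (ProjSL 4 F)) :=
      Subgroup.smul_mem_pointwise_smul _ _ _ hy
    rw [hg'] at this
    obtain ⟨w, hw, hw'⟩ := (Subgroup.mem_smul_pointwise_iff_exists _ _ _).mp this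
    have hc := congrArg ψ (z_central 1 w hw)
    rw [map_mul, map_mul] at hc
    change ψ w = g * y * g⁻¹ at hw'
    rw [hw', ← hzd] at hc
    have h3 : y = g⁻¹ * (g * y * g⁻¹) * g := by group
    rw [h3]
    calc _ = g⁻¹ * (ψ z * (g * y * g⁻¹)) * g := by group
      _ = _ := by rw [hc]; group
  obtain ⟨a, ha⟩ := ub_center h1 h2
  obtain ⟨g, rfl⟩ := mk_surj g
  rw [← z_eq a (by rw [smul_dotProduct, e30, smul_zero])] at ha
  have h4 : ψ z = MulAut.conj (mk g) (mk (tv e0 (a • e3) (by rw [smul_dotProduct, e30, smul_zero]))) := by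
    rw [← ha, MulAut.conj_apply]; group
  rw [h4, conj_eq, bar_mk, cj_tv]
  exact ⟨_, _, _, rfl⟩

end PSLCov

namespace PSLCov
open Matrix
open scoped Pointwise

variable {F : Type*} [Field F]

section
variable {K : Type*} [Field K] [Algebra F K] {n : ℕ}

def rT (ρ : K →ₐ[F] Matrix (Fin n) (Fin n) F) : K →ₐ[F] Matrix (Fin n) (Fin n) F where
  toFun k := (ρ k)ᵀ
  map_one' := by simp
  map_mul' a b := by rw [mul_comm, map_mul, transpose_mul]
  map_zero' := by simp
  map_add' := by simp
  commutes' r := by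
    rw [AlgHom.commutes]
    ext i j
    simp [Matrix.algebraMap_matrix_apply, eq_comm]

lemma rT_apply (ρ : K →ₐ[F] Matrix (Fin n) (Fin n) F) (k : K) : rT ρ k = (ρ k)ᵀ := rfl

lemma rho_inj (ρ : K →ₐ[F] Matrix (Fin n) (Fin n) F) {y : K} {w : Fin n → F} (hw : w ≠ 0)
    (h : ρ y *ᵥ w = 0) : y = 0 := by
  by_contra hy
  apply hw
  rw [← one_mulVec w, ← map_one ρ, ← inv_mul_cancel₀ hy, map_mul, ← mulVec_mulVec, h, mulVec_zero]

lemma rho_eig (ρ : K →ₐ[F] Matrix (Fin n) (Fin n) F) {y : K} {w : Fin n → F} (hw : w ≠ 0) {c : F}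
    (h : ρ y *ᵥ w = c • w) : y = algebraMap F K c := by
  rw [← sub_eq_zero]
  apply rho_inj ρ hw
  rw [map_sub, AlgHom.commutes, sub_mulVec, h, Algebra.algebraMap_eq_smul_one, smul_mulVec, one_mulVec, sub_self]

lemma pow_card_F [Finite F] {c : F} (hc : c ≠ 0) : c ^ (Nat.card F - 1) = 1 := by
  have := Fintype.ofFinite F
  rw [Nat.card_eq_fintype_card]
  exact FiniteField.pow_card_sub_one_eq_one c hc

lemma ord_dvd [Finite F] (ρ : K →ₐ[F] Matrix (Fin n) (Fin n) F) {x : K} (hx : x ≠ 0) {k : ℕ}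
    {w : Fin n → F} (hw : w ≠ 0) {c : F}
    (h : ρ (x ^ k) *ᵥ w = c • w) : orderOf x ∣ k * (Nat.card F - 1) := by
  have h1 := rho_eig ρ hw h
  have hc : c ≠ 0 := by
    rintro rfl
    rw [map_zero] at h1
    exact pow_ne_zero _ hx h1
  rw [orderOf_dvd_iff_pow_eq_one, pow_mul, h1, ← map_pow, pow_card_F hc, map_one]

lemma dvd3 {q k : ℕ} (hq : 1 < q) (h : q ^ 3 - 1 ∣ k * (q - 1)) : q ^ 2 + q + 1 ∣ k := by
  obtain ⟨r, rfl⟩ : ∃ r, q = r + 2 := ⟨q - 2, by omega⟩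
  have e : (r + 2) ^ 3 - 1 = ((r + 2) ^ 2 + (r + 2) + 1) * (r + 2 - 1) := by
    rw [show r + 2 - 1 = r + 1 by omega]
    apply Nat.sub_eq_of_eq_add
    ring
  rw [e] at h
  exact Nat.dvd_of_mul_dvd_mul_right (by omega) h

lemma dvd4 {q k : ℕ} (hq : 1 < q) (h : q ^ 4 - 1 ∣ (q - 1) * k * (q - 1)) : q ^ 2 + 1 ∣ 2 * k := by
  obtain ⟨r, rfl⟩ : ∃ r, q = r + 2 := ⟨q - 2, by omega⟩
  have e : (r + 2) ^ 4 - 1 = (((r + 2) ^ 2 + 1) * (r + 3)) * (r + 2 - 1) := by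
    rw [show r + 2 - 1 = r + 1 by omega]
    apply Nat.sub_eq_of_eq_add
    ring
  rw [e] at h
  have h1 := Nat.dvd_of_mul_dvd_mul_right (by omega) h
  have h2 := (Dvd.intro _ rfl : (r+2)^2 + 1 ∣ ((r + 2) ^ 2 + 1) * (r + 3)).trans h1
  have h3 : (r+2)^2 + 1 ∣ (r + 2 - 1) * k * (r + 3) + 2 * k := by
    refine ⟨k, ?_⟩
    rw [show r + 2 - 1 = r + 1 by omega]
    ring
  exact (Nat.dvd_add_right (h2.mul_right _)).mp h3

lemma ord_inv (x : K) : orderOf x⁻¹ = orderOf x := by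
  by_cases hx : x = 0
  · rw [hx, _root_.inv_zero]
  have := orderOf_inv (Units.mk0 x hx)
  rw [← orderOf_units, ← orderOf_units] at this
  simpa using this

lemma irr3 [Finite F] [Finite K] (ρ : K →ₐ[F] Matrix (Fin 3) (Fin 3) F) (hK : Nat.card K = Nat.card F ^ 3)
    {x y : K} (hx : orderOf x = Nat.card F ^ 3 - 1) {d : F} (hd : d ≠ 0)
    (hy : y = d • x⁻¹) (A : AddSubgroup (Fin 3 → F))
    (hA : A ≠ ⊥) (hinv : ∀ r ∈ A, r ᵥ* ρ y ∈ A) : A = ⊤ := by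
  set q := Nat.card F with hq
  have hq1 : 1 < q := Finite.one_lt_card
  let E : Subring K :=
    { carrier := {k | ∀ r ∈ A, r ᵥ* ρ k ∈ A}
      one_mem' := by intro r hr; simpa using hr
      mul_mem' := by
        intro a b ha hb r hr
        rw [map_mul, ← vecMul_vecMul]
        exact hb _ (ha _ hr)
      zero_mem' := by intro r hr; simp
      add_mem' := by
        intro a b ha hb r hr
        rw [map_add, vecMul_add]
        exact add_mem (ha _ hr) (hb _ hr)
      neg_mem' := by
        intro a ha r hr
        rw [map_neg, vecMul_neg]
        exact neg_mem (ha _ hr) }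
  have hyE : y ∈ E := hinv
  have hE : ∀ k : K, k ∈ E ↔ ∀ r ∈ A, r ᵥ* ρ k ∈ A := fun k => Iff.rfl
  have hdec : q ^ 3 - 1 = (q - 1) * (q ^ 2 + q + 1) := by
    obtain ⟨r, hr⟩ : ∃ r, q = r + 2 := ⟨q - 2, by omega⟩
    rw [hr]
    rw [show r + 2 - 1 = r + 1 by omega]
    apply Nat.sub_eq_of_eq_add
    ring
  have hx0 : x ≠ 0 := by
    rintro rfl
    rw [orderOf_zero] at hx
    have : q ^ 3 ≥ 2 ^ 3 := Nat.pow_le_pow_left hq1 3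
    omega
  have hord : orderOf (y ^ (q - 1)) = q ^ 2 + q + 1 := by
    have : y ^ (q - 1) = (x⁻¹) ^ (q - 1) := by
      rw [hy, smul_pow, pow_card_F hd, one_smul]
    rw [this, orderOf_pow_of_dvd (by omega), ord_inv, hx, hdec]
    · exact Nat.mul_div_cancel_left _ (by omega)
    · rw [ord_inv, hx, hdec]; exact Dvd.intro _ rfl
  have hcard : q ^ 2 < Nat.card E := by
    have : Nat.card (Fin (q ^ 2 + q + 1)) ≤ Nat.card E := by
      apply Nat.card_le_card_of_injective
        (fun z => (⟨(y ^ (q - 1)) ^ z.1, pow_mem (pow_mem hyE _) _⟩ : E))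
      intro a b hab
      have h1 := congrArg (fun z : E => z.1) hab
      have := pow_injOn_Iio_orderOf (x := y ^ (q - 1)) (by rw [hord]; exact a.2) (by rw [hord]; exact b.2) h1
      exact Fin.ext this
    rw [Nat.card_fin] at this
    omega
  have hinvE : ∀ z ∈ E, z⁻¹ ∈ E := by
    intro z hz
    by_cases hz0 : z = 0
    · rw [hz0, _root_.inv_zero]; exact zero_mem _
    have h2 : 2 ≤ Nat.card K := Finite.one_lt_card
    have : z⁻¹ = z ^ (Nat.card K - 2) := by
      apply inv_eq_of_mul_eq_one_right
      rw [← pow_succ', show Nat.card K - 2 + 1 = Nat.card K - 1 by omega]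
      exact pow_card_F hz0
    rw [this]
    exact pow_mem hz _
  have hEtop : ∀ w : K, w ∈ E := by
    by_contra! hcon
    obtain ⟨w, hw⟩ := hcon
    have hle : Nat.card (E × E) ≤ Nat.card K := by
      apply Nat.card_le_card_of_injective (fun z : E × E => (z.1 : K) + w * z.2)
      rintro ⟨a, b⟩ ⟨a', b'⟩ h
      simp only at h
      by_cases hb : b = b'
      · subst hb
        simpa using h
      · exfalso
        apply hw
        have hb' : (b : K) - b' ≠ 0 := by
          intro h0
          exact hb (Subtype.ext (sub_eq_zero.mp h0))
        have : w = (a' - a) * ((b : K) - b')⁻¹ := by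
          rw [eq_mul_inv_iff_mul_eq₀ hb']
          linear_combination h
        rw [this]
        exact mul_mem (sub_mem a'.2 a.2) (hinvE _ (sub_mem b.2 b'.2))
    rw [Nat.card_prod, hK] at hle
    have h4 : q ^ 2 * q ^ 2 < Nat.card E * Nat.card E := Nat.mul_lt_mul'' hcard hcard
    have h5 : q ^ 3 ≤ q ^ 4 := Nat.pow_le_pow_right (by omega) (by omega)
    have h6 : q ^ 2 * q ^ 2 = q ^ 4 := by ring
    omega
  obtain ⟨⟨r0, hr0⟩, hr00⟩ := (AddSubgroup.ne_bot_iff_exists_ne_zero).mp hA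
  have hr01 : r0 ≠ 0 := fun h => hr00 (Subtype.ext h)
  have hinj : Function.Injective (fun k : K => r0 ᵥ* ρ k) := by
    intro a b hab
    simp only at hab
    rw [← sub_eq_zero]
    apply rho_inj (rT ρ) hr01
    rw [rT_apply, mulVec_transpose, map_sub, vecMul_sub, hab, sub_self]
  have hbij : Function.Bijective (fun k : K => r0 ᵥ* ρ k) := by
    rw [Nat.bijective_iff_injective_and_card]
    refine ⟨hinj, ?_⟩
    rw [hK, Nat.card_fun, Nat.card_fin]
  rw [eq_top_iff]
  intro r _
  obtain ⟨k, rfl⟩ := hbij.2 r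
  exact hEtop k r0 hr0
end
end PSLCov

namespace PSLCov
open Matrix
open scoped Pointwise

variable {F : Type*} [Field F]

def dM (d : F) (A : Matrix (Fin 3) (Fin 3) F) : Matrix (Fin 4) (Fin 4) F :=
  fun i j => Fin.cases (Fin.cases d (fun _ => 0) j) (fun i' => Fin.cases 0 (fun j' => A i' j') j) i

@[simp] lemma dM_00 (d : F) (A : Matrix (Fin 3) (Fin 3) F) : dM d A 0 0 = d := rfl
@[simp] lemma dM_0s (d : F) (A : Matrix (Fin 3) (Fin 3) F) (j : Fin 3) : dM d A 0 j.succ = 0 := rfl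
@[simp] lemma dM_s0 (d : F) (A : Matrix (Fin 3) (Fin 3) F) (j : Fin 3) : dM d A j.succ 0 = 0 := rfl
@[simp] lemma dM_ss (d : F) (A : Matrix (Fin 3) (Fin 3) F) (i j : Fin 3) :
    dM d A i.succ j.succ = A i j := rfl

lemma dM_mul (d d' : F) (A A' : Matrix (Fin 3) (Fin 3) F) : dM d A * dM d' A' = dM (d * d') (A * A') := by
  ext i j
  rw [Matrix.mul_apply, Fin.sum_univ_succ]
  refine Fin.cases ?_ (fun i => ?_) i <;> refine Fin.cases ?_ (fun j => ?_) j <;>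
    simp [Matrix.mul_apply]

lemma dM_one : dM (1 : F) 1 = 1 := by
  ext i j
  refine Fin.cases ?_ (fun i => ?_) i <;> refine Fin.cases ?_ (fun j => ?_) j <;>
    simp [Matrix.one_apply, -Fin.reduceEq, Fin.succ_ne_zero, (Fin.succ_ne_zero _).symm]

lemma dM_pow (d : F) (A : Matrix (Fin 3) (Fin 3) F) (k : ℕ) : dM d A ^ k = dM (d ^ k) (A ^ k) := by
  induction k with
  | zero => simp [dM_one]
  | succ k ih => rw [pow_succ, ih, dM_mul, pow_succ, pow_succ]

lemma dM_transpose (d : F) (A : Matrix (Fin 3) (Fin 3) F) : (dM d A)ᵀ = dM d Aᵀ := by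
  ext i j
  rw [transpose_apply]
  refine Fin.cases ?_ (fun i => ?_) i <;> refine Fin.cases ?_ (fun j => ?_) j <;> simp

lemma dM_det (d : F) (A : Matrix (Fin 3) (Fin 3) F) : (dM d A).det = d * A.det := by
  rw [Matrix.det_succ_row_zero, Fin.sum_univ_succ]
  simp
  left
  rfl

lemma dM_mulVec (d : F) (A : Matrix (Fin 3) (Fin 3) F) (v : Fin 4 → F) :
    dM d A *ᵥ v = Fin.cons (d * v 0) (A *ᵥ Fin.tail v) := by
  ext i
  rw [mulVec, dotProduct, Fin.sum_univ_succ]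
  refine Fin.cases ?_ (fun i => ?_) i
  · simp
  · simp [mulVec, dotProduct, Fin.tail]

lemma dM_vecMul (d : F) (A : Matrix (Fin 3) (Fin 3) F) (r : Fin 3 → F) :
    (Fin.cons 0 r : Fin 4 → F) ᵥ* dM d A = Fin.cons 0 (r ᵥ* A) := by
  ext i
  rw [vecMul, dotProduct, Fin.sum_univ_succ]
  refine Fin.cases ?_ (fun i => ?_) i
  · simp
  · simp [vecMul, dotProduct]

lemma conj_pow_tb (g : S F) (k : ℕ) (v : Fin 4 → F) :
    MulAut.conj (mk g) ^ k • Tb v = Tb (mx g ^ k *ᵥ v) := by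
  rw [← map_pow]
  have : mk g ^ k = mk (g ^ k) := rfl
  rw [this, conj_tb, map_pow]

section
variable {K : Type*} [Field K] [Algebra F K]

noncomputable def bS (ρ : K →ₐ[F] Matrix (Fin 3) (Fin 3) F) (x : Kˣ) : S F :=
  mkS (dM (ρ x).det⁻¹ (ρ x)) (by
    rw [dM_det]
    apply inv_mul_cancel₀
    intro h
    have h1 : (ρ x).det * (ρ (x⁻¹ : Kˣ)).det = 1 := by
      rw [← det_mul, ← map_mul]; simp
    rw [h, zero_mul] at h1
    exact zero_ne_one h1)

lemma det_ne (ρ : K →ₐ[F] Matrix (Fin 3) (Fin 3) F) (x : Kˣ) : (ρ x).det * (ρ (x⁻¹ : Kˣ)).det = 1 := by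
  rw [← det_mul, ← map_mul]; simp

lemma bS_mx (ρ : K →ₐ[F] Matrix (Fin 3) (Fin 3) F) (x : Kˣ) : mx (bS ρ x) = dM (ρ x).det⁻¹ (ρ x) :=
  mx_mkS _ _

lemma bS_inv (ρ : K →ₐ[F] Matrix (Fin 3) (Fin 3) F) (x : Kˣ) : (bS ρ x)⁻¹ = bS ρ x⁻¹ := by
  rw [inv_eq_iff_mul_eq_one]
  apply mx_inj
  rw [map_mul, bS_mx, bS_mx, dM_mul, ← _root_.mul_inv, det_ne, ← map_mul]
  simp [dM_one]

lemma tau_bS (ρ : K →ₐ[F] Matrix (Fin 3) (Fin 3) F) (x : Kˣ) : tau (bS ρ x) = bS (rT ρ) x⁻¹ := by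
  apply mx_inj
  rw [tau_coe, bS_inv, bS_mx, bS_mx, dM_transpose, rT_apply, det_transpose]

def PropB (b : ProjSL 4 F) : Prop :=
  (∀ (v : Fin 4 → F) (k : ℕ), v ≠ 0 → MulAut.conj b ^ k • Tb v = Tb v →
    Tb v = Tb e0 ∨ Nat.card F ^ 2 + Nat.card F + 1 ∣ k) ∧
  MulAut.conj b • Tb (e0 : Fin 4 → F) = Tb e0 ∧
  ∀ A : Subgroup (ProjSL 4 F), A ≤ Tb e0 → A ≠ ⊥ → (∀ a ∈ A, b * a * b⁻¹ ∈ A) → Tb e0 ≤ A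

lemma e0_cons : (e0 : Fin 4 → F) = Fin.cons 1 0 := by
  ext i
  refine Fin.cases ?_ (fun i => ?_) i <;> simp [e0]

lemma dM_e0 (d : F) (A : Matrix (Fin 3) (Fin 3) F) : dM d A *ᵥ e0 = d • e0 := by
  rw [dM_mulVec, e0_cons]
  ext i
  refine Fin.cases ?_ (fun i => ?_) i <;> simp

lemma cons_zz : (Fin.cons 0 (0 : Fin 3 → F) : Fin 4 → F) = 0 := by
  ext i
  refine Fin.cases ?_ (fun i => ?_) i <;> simp

lemma cons_e0 (r : Fin 3 → F) : (Fin.cons 0 r : Fin 4 → F) ⬝ᵥ e0 = 0 := by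
  simp [e0]

lemma cons_of_e0 {f : Fin 4 → F} (h : f ⬝ᵥ e0 = 0) : f = Fin.cons 0 (Fin.tail f) := by
  simp [e0] at h
  rw [← h, Fin.cons_self_tail]

theorem propB_bS [Finite F] [Finite K] (hK : Nat.card K = Nat.card F ^ 3)
    (ρ : K →ₐ[F] Matrix (Fin 3) (Fin 3) F) (x : Kˣ) (hx : orderOf x = Nat.card F ^ 3 - 1) :
    PropB (mk (bS ρ x)) := by
  have hq1 : 1 < Nat.card F := Finite.one_lt_card
  have hd : (ρ x).det⁻¹ ≠ 0 := inv_ne_zero (left_ne_zero_of_mul_eq_one (det_ne ρ x))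
  refine ⟨?_, ?_, ?_⟩
  · intro v k hv h
    rw [conj_pow_tb, bS_mx, dM_pow] at h
    obtain ⟨c, hc, h1⟩ := tb_le hv h.symm.le
    rw [dM_mulVec, ← map_pow] at h1
    have h2 := congrArg Fin.tail h1
    rw [Fin.tail_cons] at h2
    by_cases ht : Fin.tail v = 0
    · left
      have hv' : v = v 0 • e0 := by
        rw [e0_cons]
        ext i
        refine Fin.cases ?_ (fun i => ?_) i
        · simp
        · have := congrFun ht i
          simpa [Fin.tail] using this
      rw [hv', tb_smul]
      intro h0
      rw [h0, zero_smul] at hv'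
      exact hv hv'
    · right
      have h3 : ρ ((x : K) ^ k) *ᵥ Fin.tail v = c • Fin.tail v := h2
      have := ord_dvd ρ x.ne_zero ht h3
      rw [orderOf_units, hx] at this
      exact dvd3 hq1 this
  · rw [conj_tb, bS_mx, dM_e0, tb_smul hd]
  · intro A hA hbot hinv
    let R : AddSubgroup (Fin 3 → F) :=
      { carrier := {r | mk (tv e0 (Fin.cons 0 r) (cons_e0 r)) ∈ A}
        zero_mem' := by
          have : mk (tv e0 (Fin.cons 0 (0 : Fin 3 → F)) (cons_e0 0)) = 1 := by
            have : tv e0 (Fin.cons 0 (0 : Fin 3 → F)) (cons_e0 0) = (1 : S F) := by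
              apply mx_inj
              rw [tv_coe]
              simp [cons_zz]
            rw [this]; rfl
          change _ ∈ A
          rw [this]; exact one_mem _
        add_mem' := by
          intro r s hr hs
          have : mk (tv e0 (Fin.cons 0 (r + s)) (cons_e0 (r + s))) =
              mk (tv e0 (Fin.cons 0 r) (cons_e0 r)) * mk (tv e0 (Fin.cons 0 s) (cons_e0 s)) := by
            change _ = mk (_ * _)
            congr 1
            rw [tv_mul]
            apply tv_coe_inj
            congr 1
            ext i
            refine Fin.cases ?_ (fun i => ?_) i <;> simp
          change _ ∈ A
          rw [this]; exact mul_mem hr hs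
        neg_mem' := by
          intro r hr
          have : mk (tv e0 (Fin.cons 0 (-r)) (cons_e0 (-r))) =
              (mk (tv e0 (Fin.cons 0 r) (cons_e0 r)))⁻¹ := by
            change _ = mk (_⁻¹)
            congr 1
            rw [tv_inv]
            apply tv_coe_inj
            congr 1
            ext i
            refine Fin.cases ?_ (fun i => ?_) i <;> simp
          change _ ∈ A
          rw [this]; exact inv_mem hr }
    have hRmem : ∀ r, r ∈ R ↔ mk (tv e0 (Fin.cons 0 r) (cons_e0 r)) ∈ A := fun _ => Iff.rfl
    have hrep : ∀ a ∈ Tb (e0 : Fin 4 → F), ∃ r, a = mk (tv e0 (Fin.cons 0 r) (cons_e0 r)) := by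
      intro a ha
      obtain ⟨f, h, rfl⟩ := mem_Tb.mp ha
      refine ⟨Fin.tail f, ?_⟩
      congr 1
      apply tv_coe_inj
      rw [← cons_of_e0 h]
    have hR : R = ⊤ := by
      apply irr3 ρ hK (x := x) (y := (ρ x).det⁻¹ • (x : K)⁻¹) (by rw [orderOf_units, hx]) hd rfl
      · intro hR
        apply hbot
        rw [eq_bot_iff]
        intro a ha
        obtain ⟨r, rfl⟩ := hrep a (hA ha)
        have : r ∈ R := ha
        rw [hR, AddSubgroup.mem_bot] at this
        have h0 := R.zero_mem
        rw [Subgroup.mem_bot, this]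
        have : tv e0 (Fin.cons 0 (0 : Fin 3 → F)) (cons_e0 0) = (1 : S F) := by
          apply mx_inj
          rw [tv_coe]
          simp [cons_zz]
        rw [this]; rfl
      · intro r hr
        have := hinv _ hr
        rw [hRmem]
        rw [← MulAut.conj_apply, conj_eq, bar_mk, cj_tv] at this
        convert this using 2
        apply tv_coe_inj
        rw [bS_mx, bS_inv, bS_mx, dM_e0, dM_vecMul, smul_vecMulVec, ← vecMulVec_smul]
        congr 1
        ext i
        refine Fin.cases ?_ (fun i => ?_) i
        · simp
        · simp [map_smul, vecMul_smul]
    intro a ha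
    obtain ⟨r, rfl⟩ := hrep a ha
    rw [← hRmem, hR]
    trivial

noncomputable def sS (ρ : K →ₐ[F] Matrix (Fin 4) (Fin 4) F) (x : Kˣ) (h : (ρ x).det = 1) : S F :=
  mkS (ρ x) h

def PropS (s : ProjSL 4 F) : Prop :=
  ∀ (v : Fin 4 → F) (k : ℕ), v ≠ 0 → MulAut.conj s ^ k • Tb v = Tb v → Nat.card F ^ 2 + 1 ∣ 2 * k

lemma propS_sS [Finite F] 
    (ρ : K →ₐ[F] Matrix (Fin 4) (Fin 4) F) (x : Kˣ) (hx : orderOf x = Nat.card F ^ 4 - 1)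
    (h : (ρ (x ^ (Nat.card F - 1) : Kˣ)).det = 1) :
    PropS (mk (sS ρ (x ^ (Nat.card F - 1)) h)) := by
  have hq1 : 1 < Nat.card F := Finite.one_lt_card
  intro v k hv h
  rw [conj_pow_tb, sS, mx_mkS, ← map_pow] at h
  obtain ⟨c, hc, h1⟩ := tb_le hv h.symm.le
  rw [Units.val_pow_eq_pow_val, ← pow_mul] at h1
  have := ord_dvd ρ x.ne_zero hv h1
  rw [orderOf_units, hx] at this
  exact dvd4 hq1 this

lemma tau_sS (ρ : K →ₐ[F] Matrix (Fin 4) (Fin 4) F) (x : Kˣ) (h : (ρ x).det = 1)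
    (h' : (rT ρ (x⁻¹ : Kˣ)).det = 1) : tau (sS ρ x h) = sS (rT ρ) x⁻¹ h' := by
  have : (sS ρ x h)⁻¹ = sS ρ x⁻¹ (by rw [rT_apply, det_transpose] at h'; exact h') := by
    rw [inv_eq_iff_mul_eq_one]
    apply mx_inj
    rw [map_mul, sS, sS, mx_mkS, mx_mkS, ← map_mul]
    simp
  apply mx_inj
  rw [tau_coe, this, sS, sS, mx_mkS, mx_mkS, rT_apply]

lemma exists_gen [Finite K] {n : ℕ} (hn : Nat.card K = n) : ∃ x : Kˣ, orderOf x = n - 1 := by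
  obtain ⟨x, hx⟩ := IsCyclic.exists_generator (α := Kˣ)
  exact ⟨x, by rw [orderOf_eq_card_of_forall_mem_zpowers hx, Nat.card_units, hn]⟩

end

lemma exists_ext [Finite F] (n : ℕ) (hn : n ≠ 0) : ∃ (K : Type) (_ : Field K) (_ : Algebra F K) (_ : Finite K),
    Nat.card K = Nat.card F ^ n ∧ Nonempty (K →ₐ[F] Matrix (Fin n) (Fin n) F) := by
  obtain ⟨p, hp⟩ := CharP.exists F
  have : Fact p.Prime := ⟨CharP.char_is_prime F p⟩
  have : NeZero n := ⟨hn⟩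
  refine ⟨FiniteField.Extension F p n, inferInstance, inferInstance, inferInstance,
    FiniteField.natCard_extension F p n, ?_⟩
  have b := Module.finBasisOfFinrankEq F _ (FiniteField.finrank_extension F p n)
  exact ⟨Algebra.leftMulMatrix b⟩

theorem exists_b [Finite F] : ∃ b : ProjSL 4 F, PropB b ∧ PropB (bar tau b) := by
  obtain ⟨K, _, _, _, hK, ⟨ρ⟩⟩ := exists_ext (F := F) 3 (by norm_num)
  obtain ⟨x, hx⟩ := exists_gen hK
  refine ⟨mk (bS ρ x), propB_bS hK ρ x hx, ?_⟩
  rw [bar_mk, tau_bS]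
  exact propB_bS hK _ _ (by rw [orderOf_inv, hx])

theorem exists_s [Finite F] : ∃ b : ProjSL 4 F, PropS b ∧ PropS (bar tau b) := by
  obtain ⟨K, _, _, _, hK, ⟨ρ⟩⟩ := exists_ext (F := F) 4 (by norm_num)
  obtain ⟨x, hx⟩ := exists_gen hK
  have key : ∀ (ρ : K →ₐ[F] Matrix (Fin 4) (Fin 4) F) (x : Kˣ),
      (ρ (x ^ (Nat.card F - 1) : Kˣ)).det = 1 := by
    intro ρ x
    rw [Units.val_pow_eq_pow_val, map_pow, det_pow]
    apply pow_card_F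
    apply left_ne_zero_of_mul_eq_one (b := (ρ (x⁻¹ : Kˣ)).det)
    rw [← det_mul, ← map_mul]; simp
  refine ⟨mk (sS ρ (x ^ (Nat.card F - 1)) (key _ _)), propS_sS ρ x hx _, ?_⟩
  have h2 := key (rT ρ) x⁻¹
  have h3 := propS_sS (rT ρ) x⁻¹ (by rw [orderOf_inv, hx]) h2
  rw [bar_mk, tau_sS _ _ _ (by rw [← inv_pow]; exact h2)]
  convert h3 using 3
  exact (inv_pow x _).symm
end PSLCov

namespace PSLCov
open Matrix
open scoped Pointwise

variable {F : Type*} [Field F]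

lemma orbit_dvd {G α : Type*} [Group G] [MulAction G α] (g : G) (C : Set α) [Finite C]
    (hC : ∀ c ∈ C, g • c ∈ C) (N a : ℕ) (h : ∀ c ∈ C, ∀ k : ℕ, g ^ k • c = c → N ∣ a * k) :
    N ∣ a * Nat.card C := by
  have hinj : Function.Injective (fun c : C => (⟨g • c.1, hC _ c.2⟩ : C)) := by
    intro c d hcd
    exact Subtype.ext (MulAction.injective g (congrArg Subtype.val hcd))
  let σ : Equiv.Perm C := Equiv.ofBijective _ (Finite.injective_iff_bijective.mp hinj)
  have hσ : ∀ c : C, ((σ c : C) : α) = g • (c : α) := fun c => rfl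
  have hσk : ∀ (k : ℕ) (c : C), (((σ ^ k) c : C) : α) = g ^ k • (c : α) := by
    intro k
    induction k with
    | zero => intro c; simp
    | succ k ih => intro c; rw [pow_succ', Equiv.Perm.mul_apply, hσ, ih, pow_succ', mul_smul]
  have := Fintype.ofFinite C
  have hcard := Nat.card_congr (MulAction.selfEquivSigmaOrbits (Subgroup.zpowers σ) C)
  have : Finite (MulAction.orbitRel.Quotient (Subgroup.zpowers σ) C) := inferInstance
  have := Fintype.ofFinite (MulAction.orbitRel.Quotient (Subgroup.zpowers σ) C)
  rw [Nat.card_sigma] at hcard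
  rw [hcard, Finset.mul_sum]
  apply Finset.dvd_sum
  intro ω _
  have := Fintype.ofFinite (MulAction.orbit (Subgroup.zpowers σ) ω.out)
  rw [Nat.card_eq_fintype_card, ← MulAction.minimalPeriod_eq_card]
  apply h _ ω.out.2
  have h1 := Function.isPeriodicPt_minimalPeriod (σ • ·) ω.out
  have h2 : (σ ^ (Function.minimalPeriod (σ • ·) ω.out)) ω.out = ω.out := by
    conv_rhs => rw [← h1]
    rw [smul_iterate]
    rfl
  rw [← hσk, h2]

lemma card_pts [Finite F] : Nat.card {X : Subgroup (ProjSL 4 F) | ∃ v, v ≠ 0 ∧ X = Tb v} ≤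
    (Nat.card F + 1) * (Nat.card F ^ 2 + 1) := by
  have h1 := Projectivization.card_of_finrank F (Fin 4 → F) (n := 4) (by simp)
  have : Finite (Projectivization F (Fin 4 → F)) := inferInstance
  have h2 : Nat.card {X : Subgroup (ProjSL 4 F) | ∃ v, v ≠ 0 ∧ X = Tb v} ≤
      Nat.card (Projectivization F (Fin 4 → F)) := by
    apply Nat.card_le_card_of_surjective
      (fun p => (⟨Tb p.rep, p.rep, p.rep_nonzero, rfl⟩ : {X : Subgroup (ProjSL 4 F) | ∃ v, v ≠ 0 ∧ X = Tb v}))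
    rintro ⟨_, v, hv, rfl⟩
    refine ⟨Projectivization.mk F v hv, Subtype.ext ?_⟩
    obtain ⟨a, ha⟩ := Projectivization.exists_smul_eq_mk_rep F v hv
    simp only
    rw [← ha]
    exact tb_smul a.ne_zero
  refine h2.trans (le_of_eq ?_)
  rw [h1]
  simp [Finset.sum_range_succ]
  ring

lemma conj_le {G : Type*} [Group G] {L : Subgroup G} {l : G} (hl : l ∈ L) : MulAut.conj l • L = L :=
  Subgroup.conj_smul_eq_self_of_mem hl

lemma conj_pow_aut {G : Type*} [Group G] (φ : MulAut G) (x : G) (k : ℕ) (X : Subgroup G) :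
    MulAut.conj (φ x) ^ k • (φ • X) = φ • (MulAut.conj x ^ k • X) := by
  rw [aut_conj, conj_pow, smul_smul, smul_smul]
  congr 1
  group

lemma stabB [Finite F] {b : ProjSL 4 F} (h1 : PropB b) (h2 : PropB (bar tau b)) (φ : MulAut (ProjSL 4 F))
    {X : Subgroup (ProjSL 4 F)} (hX : IsOm X) (k : ℕ) (h : MulAut.conj (φ b) ^ k • X = X) :
    X = φ • Tb e0 ∨ X = φ • Td e0 ∨ Nat.card F ^ 2 + Nat.card F + 1 ∣ k := by
  have hY := isOm_smul hA φ⁻¹ hX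
  set Y := φ⁻¹ • X with hYd
  have hXY : X = φ • Y := by rw [hYd, smul_smul]; simp
  rw [hXY, conj_pow_aut] at h
  have h' := smul_left_cancel _ h
  rw [hXY]
  rcases om_cases hY with ⟨v, hv, hYv⟩ | ⟨f, hf, hYv⟩
  · rw [hYv] at h' ⊢
    rcases h1.1 v k hv h' with h3 | h3
    · left; rw [h3]
    · right; right; exact h3
  · rw [hYv] at h' ⊢
    have hb : b = bar tau (bar tau b) := by
      change b = ((bar tau * bar tau : MulAut (ProjSL 4 F))) b
      rw [bar_tau_tau]; rfl
    rw [Td, hb, conj_pow_aut] at h'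
    rcases h2.1 f k hf (smul_left_cancel _ h') with h3 | h3
    · right; left; rw [Td, h3, Td]
    · right; right; exact h3

lemma stabS [Finite F] {b : ProjSL 4 F} (h1 : PropS b) (h2 : PropS (bar tau b)) (φ : MulAut (ProjSL 4 F))
    {X : Subgroup (ProjSL 4 F)} (hX : IsOm X) (k : ℕ) (h : MulAut.conj (φ b) ^ k • X = X) :
    Nat.card F ^ 2 + 1 ∣ 2 * k := by
  have hY := isOm_smul hA φ⁻¹ hX
  set Y := φ⁻¹ • X with hYd
  have hXY : X = φ • Y := by rw [hYd, smul_smul]; simp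
  rw [hXY, conj_pow_aut] at h
  have h' := smul_left_cancel _ h
  rcases om_cases hY with ⟨v, hv, hYv⟩ | ⟨f, hf, hYv⟩
  · rw [hYv] at h'
    exact h1 v k hv h'
  · rw [hYv] at h'
    have hb : b = bar tau (bar tau b) := by
      change b = ((bar tau * bar tau : MulAut (ProjSL 4 F))) b
      rw [bar_tau_tau]; rfl
    rw [Td, hb, conj_pow_aut] at h'
    exact h2 f k hf (smul_left_cancel _ h')

lemma irrB {b : ProjSL 4 F} (h1 : PropB b) (φ : MulAut (ProjSL 4 F)) {L : Subgroup (ProjSL 4 F)}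
    (hb : φ b ∈ L) (h : φ • Tb e0 ⊓ L ≠ ⊥) : φ • Tb e0 ≤ L := by
  have hm : ∀ x, x ∈ φ⁻¹ • L ↔ φ x ∈ L := by
    intro x
    rw [Subgroup.mem_inv_pointwise_smul_iff]
    rfl
  have := h1.2.2 (Tb e0 ⊓ φ⁻¹ • L) inf_le_left ?_ ?_
  · intro x hx
    obtain ⟨y, hy, rfl⟩ := (Subgroup.mem_smul_pointwise_iff_exists _ _ _).mp hx
    exact (hm y).mp (this hy).2
  · intro h0
    apply h
    rw [eq_bot_iff]
    rintro x ⟨hx, hx'⟩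
    obtain ⟨y, hy, rfl⟩ := (Subgroup.mem_smul_pointwise_iff_exists _ _ _).mp hx
    have : y ∈ Tb e0 ⊓ φ⁻¹ • L := ⟨hy, (hm y).mpr hx'⟩
    rw [h0, Subgroup.mem_bot] at this
    rw [this]; simp
  · rintro a ⟨ha, ha'⟩
    refine ⟨?_, ?_⟩
    · rw [← h1.2.1]
      exact Subgroup.smul_mem_pointwise_smul a (MulAut.conj b) _ ha
    · refine (hm _).mpr ?_
      rw [map_mul, map_mul, map_inv]
      exact mul_mem (mul_mem hb ((hm a).mp ha')) (inv_mem hb)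

lemma irrB' {b : ProjSL 4 F} (h2 : PropB (bar tau b)) (φ : MulAut (ProjSL 4 F)) {L : Subgroup (ProjSL 4 F)}
    (hb : φ b ∈ L) (h : φ • Td e0 ⊓ L ≠ ⊥) : φ • Td e0 ≤ L := by
  rw [Td, smul_smul] at h ⊢
  refine irrB h2 _ ?_ h
  have : b = bar tau (bar tau b) := by
    change b = ((bar tau * bar tau : MulAut (ProjSL 4 F))) b
    rw [bar_tau_tau]; rfl
  change φ (bar tau (bar tau b)) ∈ L
  rwa [← this]

lemma arith {q c : ℕ} (hq : 1 < q) (hc : 0 < c) (hc' : c ≤ (q + 1) * (q ^ 2 + 1))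
    (h1 : q ^ 2 + q + 1 ∣ c) (h2 : q ^ 2 + 1 ∣ 2 * c) : False := by
  have hcop : Nat.Coprime (q ^ 2 + q + 1) (q ^ 2 + 1) := by
    have e : q ^ 2 + q + 1 = q + (q ^ 2 + 1) := by ring
    rw [e, Nat.coprime_add_self_left]
    rw [sq, add_comm, Nat.coprime_add_mul_left_right]
    exact Nat.coprime_one_right q
  have h3 := hcop.mul_dvd_of_dvd_of_dvd (h1.mul_left 2) h2
  have h4 := Nat.le_of_dvd (by omega) h3
  have h5 : (q ^ 2 + q + 1) * (q ^ 2 + 1) ≤ (2 * (q + 1)) * (q ^ 2 + 1) := by nlinarith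
  have h6 := Nat.le_of_mul_le_mul_right h5 (by positivity)
  nlinarith

theorem hit [Finite F] {b s : ProjSL 4 F} (hb : PropB b) (hb' : PropB (bar tau b))
    (hs : PropS s) (hs' : PropS (bar tau s)) (φ ψ : MulAut (ProjSL 4 F)) {L : Subgroup (ProjSL 4 F)}
    (hbL : φ b ∈ L) (hsL : ψ s ∈ L) (Sc : Set (Subgroup (ProjSL 4 F))) 
    (hcard : Nat.card Sc ≤ (Nat.card F + 1) * (Nat.card F ^ 2 + 1))
    (hom : ∀ X ∈ Sc, IsOm X) (hconj : ∀ g : ProjSL 4 F, ∀ X ∈ Sc, MulAut.conj g • X ∈ Sc)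
    (hne : ∃ X ∈ Sc, X ⊓ L ≠ ⊥) :
    ∃ X ∈ Sc, X ≤ L ∧ (X = φ • Tb e0 ∨ X = φ • Td e0) := by
  have hq1 : 1 < Nat.card F := Finite.one_lt_card
  by_contra! hcon
  let C : Set (Subgroup (ProjSL 4 F)) := {X | X ∈ Sc ∧ X ⊓ L ≠ ⊥}
  have hCne : ∀ X ∈ C, X ≠ φ • Tb e0 ∧ X ≠ φ • Td e0 := by
    rintro X ⟨hX, hXL⟩
    constructor
    · rintro rfl
      exact (hcon _ hX (irrB hb φ hbL hXL)).1 rfl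
    · rintro rfl
      exact (hcon _ hX (irrB' hb' φ hbL hXL)).2 rfl
  have hCinv : ∀ l ∈ L, ∀ X ∈ C, MulAut.conj l • X ∈ C := by
    rintro l hl X ⟨hX, hXL⟩
    refine ⟨hconj l X hX, ?_⟩
    intro h0
    apply hXL
    have : MulAut.conj l • (X ⊓ L) = MulAut.conj l • ⊥ := by
      rw [Subgroup.smul_inf, conj_le hl, h0, Subgroup.smul_bot]
    exact smul_left_cancel _ this
  have hfin : Finite C := inferInstance
  apply arith hq1 (c := Nat.card C)
  · obtain ⟨X, hX⟩ := hne
    have : Nonempty C := ⟨⟨X, hX⟩⟩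
    exact Nat.card_pos
  · refine le_trans ?_ hcard
    exact Nat.card_mono (Set.toFinite _) (fun X hX => hX.1)
  · have := orbit_dvd (MulAut.conj (φ b)) C (hCinv _ hbL) (Nat.card F ^ 2 + Nat.card F + 1) 1 ?_
    · simpa using this
    · intro X hX k hk
      rcases stabB hb hb' φ (hom X hX.1) k hk with h | h | h
      · exact absurd h (hCne X hX).1
      · exact absurd h (hCne X hX).2
      · simpa using h
  · apply orbit_dvd (MulAut.conj (ψ s)) C (hCinv _ hsL)
    intro X hX k hk
    exact stabS hs hs' ψ (hom X hX.1) k hk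

end PSLCov

namespace PSLCov
open Matrix
open scoped Pointwise

variable {F : Type*} [Field F]

lemma tvn_mulVec {i j : Fin 4} (hij : i ≠ j) (a : F) (x : Fin 4 → F) :
    mx (SpecialLinearGroup.transvection hij a) *ᵥ x = fun k => x k + if k = i then a * x j else 0 := by
  have : mx (SpecialLinearGroup.transvection hij a) = 1 + single i j a := rfl
  rw [this, add_mulVec, one_mulVec]
  ext k
  simp [mulVec, dotProduct, single_apply, eq_comm]
  by_cases h : k = i
  · subst h; simp
  · simp [h, Ne.symm h]

lemma diag_dec {i j : Fin 4} (hij : i ≠ j) {c : F} (hc : c ≠ 0) :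
    SpecialLinearGroup.diag2n hij c hc =
      SpecialLinearGroup.transvection hij c * (SpecialLinearGroup.transvection hij.symm (-c⁻¹) *
      (SpecialLinearGroup.transvection hij c * (SpecialLinearGroup.transvection hij (-1) *
      (SpecialLinearGroup.transvection hij.symm 1 * SpecialLinearGroup.transvection hij (-1))))) := by
  apply mx_inj
  apply Matrix.toLin'.injective
  apply LinearMap.ext
  intro x
  simp only [toLin'_apply, map_mul, ← mulVec_mulVec, tvn_mulVec]
  have : mx (SpecialLinearGroup.diag2n hij c hc) =
    diagonal (fun k ↦ if k = i then c else if k = j then c⁻¹ else 1) := rfl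
  rw [this]
  ext k
  rw [mulVec_diagonal]
  by_cases hi : k = i
  · subst hi
    simp [hij, hij.symm]
    field_simp
    ring
  · by_cases hj : k = j
    · subst hj
      simp [hij, hij.symm]
      field_simp
      ring
    · simp [hi, hj]

lemma gen_top {L : Subgroup (ProjSL 4 F)} (h : ∀ v f h, mk (tv v f h) ∈ L) : L = ⊤ := by
  rw [eq_top_iff]
  intro x _
  obtain ⟨g, rfl⟩ := mk_surj x
  have ht : ∀ (i j : Fin 4) (hij : i ≠ j) (a : F), mk (SpecialLinearGroup.transvection hij a) ∈ L := by
    intro i j hij a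
    have h0 : (Pi.single j 1 : Fin 4 → F) ⬝ᵥ Pi.single i a = 0 := by
      simp [hij]
    have : SpecialLinearGroup.transvection hij a = tv (Pi.single i a) (Pi.single j 1) h0 := by
      apply mx_inj
      rw [tv_coe]
      change 1 + single i j a = _
      congr 1
      ext k l
      simp only [single_apply, vecMulVec_apply, Pi.single_apply]
      rcases eq_or_ne i k with h1 | h1
      · rcases eq_or_ne j l with h2 | h2
        · subst h1 h2; simp
        · simp [h1, h2, h2.symm]
      · simp [h1, h1.symm]
    rw [this]
    exact h _ _ _
  have hm : ∀ A B : S F, mk A ∈ L → mk B ∈ L → mk (A * B) ∈ L := fun A B hA hB => mul_mem hA hB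
  refine SpecialLinearGroup.diagonal_transvection_induction' (fun g => mk g ∈ L) g ?_ ht hm
  intro i j hij c hc
  change mk _ ∈ L
  rw [diag_dec]
  exact hm _ _ (ht _ _ _ _) (hm _ _ (ht _ _ _ _) (hm _ _ (ht _ _ _ _) (hm _ _ (ht _ _ _ _)
    (hm _ _ (ht _ _ _ _) (ht _ _ _ _)))))

lemma gen_all {L : Subgroup (ProjSL 4 F)} {v f : Fin 4 → F} (hv : Tb v ≤ L) (hf : Td f ≤ L)
    (hfv : f ⬝ᵥ v ≠ 0) : L = ⊤ := by
  have step : ∀ w, f ⬝ᵥ w ≠ 0 → Tb w ≤ L := by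
    intro w hw
    set c := (f ⬝ᵥ v) / (f ⬝ᵥ w) with hc
    have hc0 : c ≠ 0 := div_ne_zero hfv hw
    set u := (f ⬝ᵥ v)⁻¹ • (c • w - v) with hu
    have hfu : f ⬝ᵥ u = 0 := by
      rw [hu, dotProduct_smul, dotProduct_sub, dotProduct_smul, hc, smul_eq_mul, smul_eq_mul,
        div_mul_cancel₀ _ hw, sub_self, mul_zero]
    have hl : mk (tv u f hfu) ∈ L := hf (mem_Td.mpr ⟨u, hfu, rfl⟩)
    have h1 := conj_tb (tv u f hfu) v
    have h2 : mx (tv u f hfu) *ᵥ v = c • w := by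
      rw [tv_coe, add_mulVec, one_mulVec, vmv_mulVec, hu, smul_smul, mul_inv_cancel₀ hfv, one_smul]
      simp
    rw [h2, tb_smul hc0] at h1
    rw [← h1, ← conj_le hl]
    exact Subgroup.pointwise_smul_le_pointwise_smul_iff.mpr hv
  apply gen_top
  intro w g h
  by_cases hw : f ⬝ᵥ w = 0
  · have hf0 : f ≠ 0 := by rintro rfl; simp at hfv
    by_cases hg : ∃ c : F, g = c • f
    · obtain ⟨c, hc⟩ := hg
      apply hf
      refine mem_Td.mpr ⟨c • w, by rw [dotProduct_smul, hw, smul_zero], ?_⟩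
      congr 1
      apply tv_coe_inj
      rw [hc]; simp
    · have hli : LinearIndependent F ![f, g] := by
        rw [LinearIndependent.pair_iff' hf0]
        intro a ha
        exact hg ⟨a, ha.symm⟩
      obtain ⟨α, hα⟩ := exists_dual hli ![1, 0]
      have a1 : f ⬝ᵥ α = 1 := by rw [dotProduct_comm]; exact hα 0
      have a2 : g ⬝ᵥ α = 0 := by rw [dotProduct_comm]; exact hα 1
      have b1 : g ⬝ᵥ (w + α) = 0 := by rw [dotProduct_add, h, a2, add_zero]
      have b2 : g ⬝ᵥ (-α) = 0 := by rw [dotProduct_neg, a2, neg_zero]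
      have : tv w g h = tv (w + α) g b1 * tv (-α) g b2 := by
        rw [tv_mul']
        apply tv_coe_inj
        simp
      rw [this]
      change mk _ * mk _ ∈ L
      refine L.mul_mem ?_ ?_
      · exact step (w + α) (by rw [dotProduct_add, hw, a1]; simp) (mem_Tb.mpr ⟨_, _, rfl⟩)
      · exact step (-α) (by rw [dotProduct_neg, a1]; simp) (mem_Tb.mpr ⟨_, _, rfl⟩)
  · exact step w hw (mem_Tb.mpr ⟨_, _, rfl⟩)

lemma tb_td_e0 : Tb (e0 : Fin 4 → F) ⊓ Td e0 = ⊥ := by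
  rw [eq_bot_iff]
  rintro x ⟨h1, h2⟩
  rw [Subgroup.mem_bot]
  by_contra hx
  obtain ⟨f, hf, rfl⟩ := mem_Tb.mp h1
  obtain ⟨u, hu, he⟩ := mem_Td.mp h2
  obtain ⟨v', f', h', hmk, hv0, hf0⟩ := isTr_rep ⟨_, _, _, rfl⟩ hx
  have hne : vecMulVec e0 f ≠ 0 := by
    rw [mk_tv_eq hmk]; exact vmv_ne_zero.mpr ⟨hv0, hf0⟩
  obtain ⟨-, hf1⟩ := vmv_ne_zero.mp hne
  obtain ⟨c, hc, h3⟩ := vmv_eq_right e0_ne hf1 (mk_tv_eq he)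
  have := congrFun h3 0
  simp [e0] at hf this
  rw [hf] at this
  simp at this

theorem part2 [Finite F] (L : Subgroup (ProjSL 4 F)) (h : ∀ g, ∃ φ : ProjSL 4 F ≃* ProjSL 4 F, φ g ∈ L) :
    L = ⊤ := by
  obtain ⟨b, hb, hb'⟩ := exists_b (F := F)
  obtain ⟨s, hs, hs'⟩ := exists_s (F := F)
  obtain ⟨φ, hφ⟩ := h b
  obtain ⟨ψ, hψ⟩ := h s
  obtain ⟨χ, hχ⟩ := h (mk (tv e0 e3 e30))
  have hne : mk (tv (e0 : Fin 4 → F) e3 e30) ≠ 1 := by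
    intro h1
    have := mk_tv_eq_one h1
    rw [vecMulVec_eq_zero] at this
    rcases this with h | h
    · exact e0_ne h
    · simp [e3] at h
  have htr : IsTr (χ (mk (tv (e0 : Fin 4 → F) e3 e30))) := hA χ _ ⟨_, _, _, rfl⟩
  have hne' : χ (mk (tv (e0 : Fin 4 → F) e3 e30)) ≠ 1 := by
    intro h1
    exact hne (χ.injective (by rw [h1, map_one]))
  obtain ⟨v, f, hvf, he, hv, hf⟩ := isTr_rep htr hne'
  change χ _ = _ at he
  rw [he] at hχ hne'
  have hnb : ∀ X : Subgroup (ProjSL 4 F), mk (tv v f hvf) ∈ X → X ⊓ L ≠ ⊥ := by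
    intro X hX h0
    have : mk (tv v f hvf) ∈ X ⊓ L := ⟨hX, hχ⟩
    rw [h0, Subgroup.mem_bot] at this
    exact hne' this
  obtain ⟨_, ⟨w, hw, rfl⟩, hwL, hwc⟩ := hit hb hb' hs hs' φ ψ hφ hψ
    {X : Subgroup (ProjSL 4 F) | ∃ v, v ≠ 0 ∧ X = Tb v} card_pts
    (by rintro _ ⟨v, hv, rfl⟩; exact isOm_Tb hv)
    (by
      rintro g _ ⟨v, hv, rfl⟩
      obtain ⟨g, rfl⟩ := mk_surj g
      exact ⟨_, mulVec_ne (mx_mul_inv g) hv, conj_tb g v⟩)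
    ⟨Tb v, ⟨v, hv, rfl⟩, hnb _ (mem_Tb.mpr ⟨_, _, rfl⟩)⟩
  obtain ⟨_, ⟨g, hg, rfl⟩, hgL, hgc⟩ := hit hb hb' hs hs' φ ψ hφ hψ
    {X : Subgroup (ProjSL 4 F) | ∃ v, v ≠ 0 ∧ X = Td v}
    (by
      refine le_trans ?_ card_pts
      apply Nat.card_le_card_of_injective (fun X => ⟨bar tau • X.1, by
        obtain ⟨v, hv, h⟩ := X.2
        refine ⟨v, hv, ?_⟩
        rw [h, Td, smul_smul, bar_tau_tau, one_smul]⟩)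
      intro X Y hXY
      exact Subtype.ext (smul_left_cancel _ (congrArg Subtype.val hXY)))
    (by rintro _ ⟨v, hv, rfl⟩; exact isOm_smul hA _ (isOm_Tb hv))
    (by
      rintro g _ ⟨v, hv, rfl⟩
      obtain ⟨g, rfl⟩ := mk_surj g
      exact ⟨_, mulVec_ne (mx_mul_inv (tau g)) hv, conj_td g v⟩)
    ⟨Td f, ⟨f, hf, rfl⟩, hnb _ (mem_Td.mpr ⟨_, _, rfl⟩)⟩
  have hbot : Tb w ⊓ Td g = ⊥ := by
    have hne : Tb w ≠ Td g := fun h => tb_not_le hw h.le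
    rcases hwc with h1 | h1 <;> rcases hgc with h2 | h2
    · exact absurd (h1.trans h2.symm) hne
    · rw [h1, h2, ← Subgroup.smul_inf, tb_td_e0, Subgroup.smul_bot]
    · rw [h1, h2, ← Subgroup.smul_inf, inf_comm, tb_td_e0, Subgroup.smul_bot]
    · exact absurd (h1.trans h2.symm) hne
  refine gen_all hwL hgL ?_
  intro h0
  have : mk (tv w g h0) ∈ Tb w ⊓ Td g := ⟨mem_Tb.mpr ⟨_, _, rfl⟩, mem_Td.mpr ⟨_, _, rfl⟩⟩
  rw [hbot, Subgroup.mem_bot] at this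
  have := mk_tv_eq_one this
  exact (vmv_ne_zero.mpr ⟨hw, hg⟩) this

end PSLCov

namespace PSLCov
open Matrix
open scoped Pointwise

variable {F : Type*} [Field F]

lemma exists_d [Finite F] : ∃ d : F, ∀ x : F, x ^ 2 + x ≠ d := by
  by_contra! h
  have hs : Function.Surjective (fun x : F => x ^ 2 + x) := h
  have hi := Finite.injective_iff_surjective.mpr hs
  have : (0 : F) = -1 := hi (by simp)
  have h1 : (1 : F) = 0 := by linear_combination this
  exact one_ne_zero h1

section poly
open Polynomial

lemma lift_root [Finite F] {d : F} (hd : ∀ x : F, x ^ 2 + x ≠ d) {f : F[X]} (hf : Irreducible f)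
    (he : 2 ∣ f.natDegree) : ∃ r : F[X], f ∣ r ^ 2 + r - C d := by
  have hdeg : (X ^ 2 + X - C d : F[X]).natDegree = 2 := by compute_degree!
  have hp0 : (X ^ 2 + X - C d : F[X]) ≠ 0 := by
    intro h; rw [h] at hdeg; simp at hdeg
  have hp : Irreducible (X ^ 2 + X - C d : F[X]) := by
    rw [Polynomial.irreducible_iff_roots_eq_zero_of_degree_le_three (by omega) (by omega)]
    rw [Multiset.eq_zero_iff_forall_notMem]
    intro a ha
    rw [mem_roots hp0] at ha
    simp [IsRoot] at ha
    exact hd a (sub_eq_zero.mp ha)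
  have : Fact (Irreducible f) := ⟨hf⟩
  have : Fact (Irreducible (X ^ 2 + X - C d : F[X])) := ⟨hp⟩
  have h1 : Module.finrank F (AdjoinRoot f) = f.natDegree := by
    rw [(AdjoinRoot.powerBasis hf.ne_zero).finrank, AdjoinRoot.powerBasis_dim]
  have h2 : Module.finrank F (AdjoinRoot (X ^ 2 + X - C d : F[X])) = 2 := by
    rw [(AdjoinRoot.powerBasis hp.ne_zero).finrank, AdjoinRoot.powerBasis_dim, hdeg]
  have : Module.Finite F (AdjoinRoot f) := (AdjoinRoot.powerBasis hf.ne_zero).finite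
  have : Finite (AdjoinRoot f) := Module.finite_of_finite F
  obtain ⟨φ⟩ := FiniteField.nonempty_algHom_of_finrank_dvd (F := F)
    (K := AdjoinRoot (X ^ 2 + X - C d : F[X])) (L := AdjoinRoot f) (by rw [h1, h2]; exact he)
  obtain ⟨r, hr⟩ := AdjoinRoot.mk_surjective (φ (AdjoinRoot.root _))
  refine ⟨r, ?_⟩
  rw [← AdjoinRoot.mk_eq_zero, map_sub, map_add, map_pow, hr, ← map_pow, ← map_add, AdjoinRoot.mk_C]
  have h3 : AdjoinRoot.of f d = φ (AdjoinRoot.of _ d) := (φ.commutes d).symm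
  rw [h3, ← map_sub]
  have h4 := AdjoinRoot.mk_self (f := (X ^ 2 + X - C d : F[X]))
  rw [map_sub, map_add, map_pow, AdjoinRoot.mk_X, AdjoinRoot.mk_C] at h4
  rw [h4, map_zero]

lemma hensel {d : F} (hd : ∀ x : F, x ^ 2 + x ≠ d) {f : F[X]} {r : F[X]} (h : f ∣ r ^ 2 + r - C d) :
    ∃ r : F[X], f * f ∣ r ^ 2 + r - C d := by
  have h0 : 1 + 4 * d ≠ 0 := by
    intro h
    apply hd (2 * d)
    linear_combination d * h
  set u : F := (1 + 4 * d)⁻¹ with hu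
  have hu1 : (1 + 4 * C d) * C u = (1 : F[X]) := by
    have : C ((1 + 4 * d) * u) = (1 : F[X]) := by rw [hu, mul_inv_cancel₀ h0, C_1]
    rwa [C_mul, C_add, C_mul, C_1, map_ofNat C 4] at this
  obtain ⟨m, hm⟩ := h
  refine ⟨r - (r ^ 2 + r - C d) * (2 * r + 1) * C u,
    m * m * (-4 * C u + (2 * r + 1) ^ 2 * C u ^ 2), ?_⟩
  have : f * f * (m * m * (-4 * C u + (2 * r + 1) ^ 2 * C u ^ 2)) =
    (r ^ 2 + r - C d) ^ 2 * (-4 * C u + (2 * r + 1) ^ 2 * C u ^ 2) := by rw [hm]; ring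
  rw [this]
  linear_combination -(r ^ 2 + r - C d) * hu1

lemma crt {d : F} {f h r1 r2 : F[X]} (hc : IsCoprime f h) (h1 : f ∣ r1 ^ 2 + r1 - C d)
    (h2 : h ∣ r2 ^ 2 + r2 - C d) : ∃ r : F[X], f * h ∣ r ^ 2 + r - C d := by
  obtain ⟨a, b, hab⟩ := hc
  refine ⟨r2 * (a * f) + r1 * (b * h), IsCoprime.mul_dvd ⟨a, b, hab⟩ ?_ ?_⟩
  · have e : r2 * (a * f) + r1 * (b * h) = r1 + f * (a * (r2 - r1)) := by
      linear_combination r1 * hab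
    rw [e]
    obtain ⟨m, hm⟩ := h1
    exact ⟨m + a * (r2 - r1) * (2 * r1 + 1 + f * (a * (r2 - r1))), by linear_combination hm⟩
  · have e : r2 * (a * f) + r1 * (b * h) = r2 + h * (b * (r1 - r2)) := by
      linear_combination r2 * hab
    rw [e]
    obtain ⟨m, hm⟩ := h2
    exact ⟨m + b * (r1 - r2) * (2 * r2 + 1 + h * (b * (r1 - r2))), by linear_combination hm⟩

lemma irr_two {f : F[X]} (h : f.natDegree = 2) (hr : ∀ x, f.eval x ≠ 0) : Irreducible f := by
  have hp0 : f ≠ 0 := by intro h0; rw [h0] at h; simp at h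
  rw [Polynomial.irreducible_iff_roots_eq_zero_of_degree_le_three (by omega) (by omega)]
  rw [Multiset.eq_zero_iff_forall_notMem]
  intro a ha
  rw [mem_roots hp0] at ha
  exact hr a ha

lemma no_root_deg {f : F[X]} (hr : ∀ x, f.eval x ≠ 0) : f.natDegree ≠ 1 := by
  intro h
  have h1 : f.degree = 1 := by
    rw [degree_eq_natDegree (by rintro rfl; simp at h), h]; rfl
  obtain ⟨x, hx⟩ := exists_root_of_degree_eq_one h1
  exact hr x hx

lemma exists_r [Finite F] {d : F} (hd : ∀ x : F, x ^ 2 + x ≠ d) {χ : F[X]} (h4 : χ.natDegree = 4)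
    (hr : ∀ x, χ.eval x ≠ 0) : ∃ r : F[X], χ ∣ r ^ 2 + r - C d := by
  have hχ0 : χ ≠ 0 := by intro h0; rw [h0] at h4; simp at h4
  obtain ⟨f, hf, h, rfl⟩ := Polynomial.exists_irreducible_of_natDegree_pos (f := χ) (by omega)
  have hf0 := hf.ne_zero
  have hh0 : h ≠ 0 := by rintro rfl; simp at hχ0
  have rf : ∀ x, f.eval x ≠ 0 := fun x hx => hr x (by rw [eval_mul, hx, zero_mul])
  have rh : ∀ x, h.eval x ≠ 0 := fun x hx => hr x (by rw [eval_mul, hx, mul_zero])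
  rw [natDegree_mul hf0 hh0] at h4
  have d1 := no_root_deg rf
  have d2 := no_root_deg rh
  have d3 := hf.natDegree_pos
  have hcase : (f.natDegree = 4 ∧ h.natDegree = 0) ∨ (f.natDegree = 2 ∧ h.natDegree = 2) := by omega
  rcases hcase with ⟨a1, a2⟩ | ⟨a1, a2⟩
  · obtain ⟨r, hr⟩ := lift_root hd hf (by rw [a1]; norm_num)
    refine ⟨r, ?_⟩
    have hu : IsUnit h := by
      rw [isUnit_iff_degree_eq_zero, degree_eq_natDegree hh0, a2]; rfl
    rwa [hu.mul_right_dvd]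
  · have hh := irr_two a2 rh
    obtain ⟨r1, hr1⟩ := lift_root hd hf (by rw [a1])
    obtain ⟨r2, hr2⟩ := lift_root hd hh (by rw [a2])
    by_cases hdv : f ∣ h
    · obtain ⟨r, hr⟩ := hensel hd hr1
      refine ⟨r, dvd_trans (mul_dvd_mul_left f ?_) hr⟩
      exact ((hf.associated_of_dvd hh hdv).symm).dvd
    · exact crt ((hf.coprime_iff_not_dvd).mpr hdv) hr1 hr2

lemma exists_J [Finite F] {d : F} (hd : ∀ x : F, x ^ 2 + x ≠ d) (M : Matrix (Fin 4) (Fin 4) F)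
    (hr : ∀ x : F, ∀ v : Fin 4 → F, v ≠ 0 → M *ᵥ v ≠ x • v) :
    ∃ J : Matrix (Fin 4) (Fin 4) F, M * J = J * M ∧ J * J = d • 1 - J := by
  obtain ⟨r, m, hm⟩ := exists_r hd (χ := M.charpoly) (by simp [Matrix.charpoly_natDegree_eq_dim]) (by
    intro x hx
    rw [Matrix.eval_charpoly] at hx
    obtain ⟨v, hv, h⟩ := Matrix.exists_mulVec_eq_zero_iff.mpr hx
    apply hr x v hv
    rw [sub_mulVec, sub_eq_zero] at h
    rw [← h]
    simp)
  refine ⟨aeval M r, ?_, ?_⟩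
  · have h1 : aeval M (X * r) = aeval M (r * X) := by rw [mul_comm]
    simpa using h1
  · have h1 := congrArg (aeval M) hm
    rw [map_mul, Matrix.aeval_self_charpoly, zero_mul, map_sub, map_add, map_pow, aeval_C,
      Algebra.algebraMap_eq_smul_one, sub_eq_zero] at h1
    rw [← h1, pow_two, add_sub_cancel_right]

end poly

def JJ (d : F) : Matrix (Fin 4) (Fin 4) F := !![0, d, 0, 0; 1, -1, 0, 0; 0, 0, 0, d; 0, 0, 1, -1]

lemma norm_ne {d : F} (hd : ∀ x : F, x ^ 2 + x ≠ d) {a b : F} (h : a ^ 2 - a * b - b ^ 2 * d = 0) :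
    a = 0 ∧ b = 0 := by
  by_cases hb : b = 0
  · subst hb; simpa using h
  · exfalso
    apply hd (-a / b)
    field_simp
    linear_combination h

lemma conj_J {d : F} (hd : ∀ x : F, x ^ 2 + x ≠ d) (J : Matrix (Fin 4) (Fin 4) F)
    (hJ : J * J = d • 1 - J) : ∃ P Q : Matrix (Fin 4) (Fin 4) F, P * Q = 1 ∧ J * P = P * JJ d := by
  have hJ2 : ∀ v, J *ᵥ (J *ᵥ v) = d • v - J *ᵥ v := by
    intro v
    rw [mulVec_mulVec, hJ, sub_mulVec, smul_mulVec, one_mulVec]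
  obtain ⟨w, hw⟩ : ∃ w : Fin 4 → F, w ∉ Submodule.span F {e0, J *ᵥ e0} := by
    by_contra! h
    have h1 : Submodule.span F {(e0 : Fin 4 → F), J *ᵥ e0} = ⊤ := by
      rw [eq_top_iff]; intro x _; exact h x
    classical
    have h2 := finrank_span_finset_le_card (R := F) ({(e0 : Fin 4 → F), J *ᵥ e0} : Finset (Fin 4 → F))
    rw [Set.finrank, Finset.coe_pair, h1, finrank_top] at h2
    have h3 := Finset.card_le_two (a := (e0 : Fin 4 → F)) (b := J *ᵥ e0)
    simp at h2
    omega
  rw [Submodule.mem_span_pair] at hw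
  set P : Matrix (Fin 4) (Fin 4) F := (Matrix.of ![e0, J *ᵥ e0, w, J *ᵥ w])ᵀ with hP
  have hPv : ∀ x : Fin 4 → F, P *ᵥ x = x 0 • e0 + x 1 • (J *ᵥ e0) + x 2 • w + x 3 • (J *ᵥ w) := by
    intro x
    ext k
    simp [hP, mulVec, dotProduct, Fin.sum_univ_four, mul_comm]
  have hdet : P.det ≠ 0 := by
    intro h0
    obtain ⟨x, hx, h⟩ := Matrix.exists_mulVec_eq_zero_iff.mpr h0
    rw [hPv] at h
    have h' := congrArg (fun y => J *ᵥ y) h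
    simp only [mulVec_add, mulVec_smul, hJ2, mulVec_zero] at h'
    have key : ((x 2) ^ 2 - x 2 * x 3 - (x 3) ^ 2 * d) • w =
        (-((x 2 - x 3) * x 0 - x 3 * x 1 * d)) • e0
          + (-((x 2 - x 3) * x 1 - x 3 * x 0 + x 3 * x 1)) • (J *ᵥ e0) := by
      linear_combination (norm := module) (x 2 - x 3) • h - x 3 • h'
    have h23 : x 2 = 0 ∧ x 3 = 0 := by
      apply norm_ne hd
      by_contra hn
      apply hw
      refine ⟨(x 2 ^ 2 - x 2 * x 3 - x 3 ^ 2 * d)⁻¹ * (-((x 2 - x 3) * x 0 - x 3 * x 1 * d)),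
        (x 2 ^ 2 - x 2 * x 3 - x 3 ^ 2 * d)⁻¹ * (-((x 2 - x 3) * x 1 - x 3 * x 0 + x 3 * x 1)), ?_⟩
      rw [mul_smul, mul_smul, ← smul_add, ← key, inv_smul_smul₀ hn]
    obtain ⟨h2, h3⟩ := h23
    rw [h2, h3] at h h'
    have key2 : ((x 0) ^ 2 - x 0 * x 1 - (x 1) ^ 2 * d) • (e0 : Fin 4 → F) = 0 := by
      linear_combination (norm := module) (x 0 - x 1) • h - x 1 • h'
    have h01 := norm_ne hd ((smul_eq_zero.mp key2).resolve_right e0_ne)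
    apply hx
    ext k
    fin_cases k
    · exact h01.1
    · exact h01.2
    · exact h2
    · exact h3
  refine ⟨P, P⁻¹, Matrix.mul_nonsing_inv _ (Ne.isUnit hdet), ?_⟩
  apply Matrix.toLin'.injective
  apply LinearMap.ext
  intro x
  rw [toLin'_apply, toLin'_apply, ← mulVec_mulVec, ← mulVec_mulVec, hPv, hPv]
  simp only [mulVec_add, mulVec_smul, hJ2]
  have j0 : (JJ d *ᵥ x) 0 = d * x 1 := by simp [JJ, mulVec, dotProduct, Fin.sum_univ_four]
  have j1 : (JJ d *ᵥ x) 1 = x 0 - x 1 := by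
    simp [JJ, mulVec, dotProduct, Fin.sum_univ_four, sub_eq_add_neg]
  have j2 : (JJ d *ᵥ x) 2 = d * x 3 := by simp [JJ, mulVec, dotProduct, Fin.sum_univ_four]
  have j3 : (JJ d *ᵥ x) 3 = x 2 - x 3 := by
    simp [JJ, mulVec, dotProduct, Fin.sum_univ_four, sub_eq_add_neg]
  rw [j0, j1, j2, j3]
  module

def HS (F : Type*) [Field F] : Subgroup (S F) where
  carrier := {g | ∃ c : F, mx g *ᵥ e0 = c • e0}
  one_mem' := ⟨1, by simp⟩
  mul_mem' := by
    rintro a b ⟨c, hc⟩ ⟨c', hc'⟩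
    exact ⟨c' * c, by rw [map_mul, ← mulVec_mulVec, hc', mulVec_smul, hc, smul_smul]⟩
  inv_mem' := by
    rintro a ⟨c, hc⟩
    have h1 : mx a⁻¹ *ᵥ (mx a *ᵥ e0) = e0 := by rw [mulVec_mulVec, mx_inv_mul, one_mulVec]
    rw [hc, mulVec_smul] at h1
    have hc0 : c ≠ 0 := by
      rintro rfl
      rw [zero_smul] at h1
      exact e0_ne h1.symm
    exact ⟨c⁻¹, by rw [← h1, inv_smul_smul₀ hc0, h1]⟩

def KS (d : F) : Subgroup (S F) where
  carrier := {g | mx g * JJ d = JJ d * mx g}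
  one_mem' := by simp
  mul_mem' := by
    intro a b (ha : _ = _) (hb : _ = _)
    change mx (a * b) * _ = _ * mx (a * b)
    rw [map_mul, mul_assoc, hb, ← mul_assoc, ha, mul_assoc]
  inv_mem' := by
    intro a (ha : _ = _)
    change mx a⁻¹ * _ = _ * mx a⁻¹
    calc mx a⁻¹ * JJ d = mx a⁻¹ * (JJ d * mx a) * mx a⁻¹ := by
          rw [mul_assoc, mul_assoc, mx_mul_inv, mul_one]
      _ = _ := by rw [← ha, ← mul_assoc, mx_inv_mul, one_mul]

lemma mx_tv_ne (d : F) : tv (e0 : Fin 4 → F) e3 e30 ∉ KS d := by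
  intro (h : _ = _)
  rw [tv_coe] at h
  have := congrFun (congrFun h 0) 2
  simp [JJ, Matrix.mul_apply, Fin.sum_univ_four, vecMulVec_apply, e0, e3] at this

theorem part1 [Finite F] : ∃ H K : Subgroup (ProjSL 4 F), H ≠ ⊤ ∧ K ≠ ⊤ ∧
    ∀ g, ∃ φ : ProjSL 4 F ≃* ProjSL 4 F, φ g ∈ H ∨ φ g ∈ K := by
  obtain ⟨d, hd⟩ := exists_d (F := F)
  refine ⟨(HS F).map (QuotientGroup.mk' _), (KS d).map (QuotientGroup.mk' _), ?_, ?_, ?_⟩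
  · intro h
    have e03 : (e0 : Fin 4 → F) ⬝ᵥ e3 = 0 := by rw [dotProduct_comm]; exact e30
    have h1 : mk (tv (e3 : Fin 4 → F) e0 e03) ∈ (HS F).map (QuotientGroup.mk' _) := by
      rw [h]; trivial
    obtain ⟨g, ⟨c, hc⟩, hg⟩ := h1
    obtain ⟨r, hr⟩ := mk_eq.mp hg
    have h2 : mx (tv (e3 : Fin 4 → F) e0 e03) *ᵥ e0 = r • c • e0 := by
      rw [hr, smul_mulVec, hc]
    rw [tv_coe, add_mulVec, one_mulVec, vmv_mulVec] at h2
    have := congrFun h2 3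
    simp [e0, e3] at this
  · intro h
    have h1 : mk (tv (e0 : Fin 4 → F) e3 e30) ∈ (KS d).map (QuotientGroup.mk' _) := by
      rw [h]; trivial
    obtain ⟨g, hc, hg⟩ := h1
    obtain ⟨r, hr⟩ := mk_eq.mp hg
    apply mx_tv_ne d
    change _ * _ = _ * _
    change _ * _ = _ * _ at hc
    rw [hr, smul_mul_assoc, hc, mul_smul_comm]
  · intro g
    obtain ⟨g, rfl⟩ := mk_surj g
    by_cases hv : ∃ x : F, ∃ v : Fin 4 → F, v ≠ 0 ∧ mx g *ᵥ v = x • v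
    · obtain ⟨x, v, hv0, hv⟩ := hv
      obtain ⟨f, hf, hfv⟩ : ∃ f : Fin 4 → F, f ≠ 0 ∧ f ⬝ᵥ v = 0 := by
        by_cases h0 : v 0 = 0
        · exact ⟨e0, e0_ne, by simp [e0, h0]⟩
        · refine ⟨![v 1, - v 0, 0, 0], ?_, ?_⟩
          · intro h
            have := congrFun h 1
            simp at this
            exact h0 this
          · simp [dotProduct, Fin.sum_univ_four]; ring
      obtain ⟨P, Q, hPQ, hP, -⟩ := exists_P hfv hv0 hf
      have hQP := mul_eq_one_comm.mp hPQ
      refine ⟨bar (cj Q P hQP), Or.inl ⟨cj Q P hQP g, ⟨x, ?_⟩, (bar_mk _ _).symm⟩⟩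
      rw [cj_coe, ← mulVec_mulVec, hP, ← mulVec_mulVec, hv, mulVec_smul, ← hP, mulVec_mulVec, hQP,
        one_mulVec]
    · push Not at hv
      obtain ⟨J, hJ1, hJ2⟩ := exists_J hd (mx g) hv
      obtain ⟨P, Q, hPQ, hP⟩ := conj_J hd J hJ2
      have hQP := mul_eq_one_comm.mp hPQ
      refine ⟨bar (cj Q P hQP), Or.inr ⟨cj Q P hQP g, ?_, (bar_mk _ _).symm⟩⟩
      change mx (cj Q P hQP g) * JJ d = JJ d * mx (cj Q P hQP g)
      rw [cj_coe]
      have hJJ : JJ d = Q * J * P := by rw [mul_assoc, hP, ← mul_assoc, hQP, one_mul]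
      calc Q * mx g * P * JJ d = Q * (mx g * J) * P := by simp only [mul_assoc, hP]
        _ = Q * J * (P * Q) * mx g * P := by rw [hJ1, hPQ, mul_one]; simp only [mul_assoc]
        _ = _ := by rw [hJJ]; simp only [mul_assoc]

end PSLCov

/-- **The weak normal covering number of `PSL₄(q)` equals 2** for every prime power `q`. -/
theorem gammaW_PSL4_eq_two (q : ℕ) (hq : IsPrimePow q)
    (F : Type*) [Field F] [Fintype F] (hF : Fintype.card F = q) :
    (∃ H K : Subgroup (ProjSL 4 F), H ≠ ⊤ ∧ K ≠ ⊤ ∧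
        ∀ g : ProjSL 4 F,
          ∃ φ : ProjSL 4 F ≃* ProjSL 4 F, φ g ∈ H ∨ φ g ∈ K) ∧
      ¬ ∃ L : Subgroup (ProjSL 4 F), L ≠ ⊤ ∧
          ∀ g : ProjSL 4 F,
            ∃ φ : ProjSL 4 F ≃* ProjSL 4 F, φ g ∈ L := by
  have : Finite F := Finite.of_fintype F
  refine ⟨PSLCov.part1, ?_⟩
  rintro ⟨L, hL, h⟩
  exact hL (PSLCov.part2 L h)
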